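/- arXiv:1812.08894 — 2 statements merged into one kernel-verified Lean document; each statement's English description precedes it below -/
import Mathlib

section
/- Fix n ≥ 1 and ε > 0, and let u : ℝⁿ × [0,∞) → ℝ be a smooth solution of ∂ₜu = Δu − (1/ε²) f(u) with f(u) = 2u(u²−1), |u| ≤ 1, such that for every T > 0 the function u and its spatial derivatives up to third order and its time derivative are uniformly bounded on ℝⁿ × [0,T]. Let μᵗ denote the measure with density (ε/2)|∇u(x,t)|² + (1/ε)F(u(x,t)) with respect to Lebesgue measure, F(u) = (1/2)(1−u²)². Assume (ε/2)|∇u(x,t)|² ≤ (1/ε)F(u(x,t)) for all x ∈ ℝⁿ and t ≥ 0. Then for every T > 0 and all 0 ≤ t₁ ≤ t₂, the local entropy satisfies λ^{(0,T)}(μ^{t₂}) ≤ λ^{(0,T+(t₂−t₁))}(μ^{t₁}). -/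
open Real MeasureTheory Metric ENNReal

/-- The Laplacian of `f : ℝⁿ → ℝ` at `x`, as the sum of the second partial derivatives in
the coordinate directions. -/
noncomputable def spaceLaplacian (n : ℕ) (f : EuclideanSpace ℝ (Fin n) → ℝ)
    (x : EuclideanSpace ℝ (Fin n)) : ℝ :=
  ∑ i : Fin n,
    fderiv ℝ (fun y => fderiv ℝ f y (EuclideanSpace.single i (1 : ℝ))) x
      (EuclideanSpace.single i (1 : ℝ))

/-- The (n-1)-dimensional Gaussian density `(4πs)^{-(n-1)/2} exp(-|x-y|²/(4s))` on `ℝⁿ`. -/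
noncomputable def gaussianDensity (n : ℕ) (y : EuclideanSpace ℝ (Fin n)) (s : ℝ)
    (x : EuclideanSpace ℝ (Fin n)) : ℝ :=
  (4 * Real.pi * s) ^ (-(((n : ℝ) - 1) / 2)) * Real.exp (-(dist x y) ^ 2 / (4 * s))

/-- The local entropy `λ^{(0,T)}(μ) = sup_{y ∈ ℝⁿ, 0 < s < T} ∫ ρ_{y,s}(x,0) dμ(x)` for a
real `T > 0`. -/
noncomputable def localEntropy (n : ℕ) (T : ℝ) (μ : Measure (EuclideanSpace ℝ (Fin n))) :
    ℝ≥0∞ :=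
  ⨆ (y : EuclideanSpace ℝ (Fin n)) (s : ℝ) (_ : 0 < s) (_ : s < T),
    ∫⁻ x, ENNReal.ofReal (gaussianDensity n y s x) ∂μ

namespace ACEntropy

/-- Polynomial growth in space, uniformly for times in `I`. -/
def PG {n : ℕ} (y : EuclideanSpace ℝ (Fin n)) (I : Set ℝ)
    (f : EuclideanSpace ℝ (Fin n) → ℝ → ℝ) : Prop :=
  (∀ t ∈ I, Continuous fun x => f x t) ∧
    ∃ K : ℝ, 0 ≤ K ∧ ∃ k : ℕ, ∀ x, ∀ t ∈ I, |f x t| ≤ K * (1 + ‖x - y‖) ^ k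

section
variable {n : ℕ} {y : EuclideanSpace ℝ (Fin n)} {I : Set ℝ}
  {f g : EuclideanSpace ℝ (Fin n) → ℝ → ℝ}

lemma PG.of_bdd (hc : ∀ t ∈ I, Continuous fun x => f x t) (C : ℝ)
    (h : ∀ x, ∀ t ∈ I, |f x t| ≤ C) : PG y I f := by
  refine ⟨hc, |C|, abs_nonneg _, 0, fun x t ht => ?_⟩
  simpa using (h x t ht).trans (le_abs_self C)

lemma PG.const (c : ℝ) : PG y I (fun _ _ => c) :=
  PG.of_bdd (fun _ _ => continuous_const) |c| (fun _ _ _ => le_rfl)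

lemma PG.mul (hf : PG y I f) (hg : PG y I g) : PG y I (fun x t => f x t * g x t) := by
  obtain ⟨fc, K, hK, k, hf⟩ := hf
  obtain ⟨gc, L, hL, l, hg⟩ := hg
  refine ⟨fun t ht => (fc t ht).mul (gc t ht), K * L, by positivity, k + l, fun x t ht => ?_⟩
  rw [abs_mul, pow_add]
  calc |f x t| * |g x t| ≤ (K * (1 + ‖x - y‖) ^ k) * (L * (1 + ‖x - y‖) ^ l) :=
        mul_le_mul (hf x t ht) (hg x t ht) (abs_nonneg _) (by positivity)
    _ = _ := by ring

lemma PG.add (hf : PG y I f) (hg : PG y I g) : PG y I (fun x t => f x t + g x t) := by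
  obtain ⟨fc, K, hK, k, hf⟩ := hf
  obtain ⟨gc, L, hL, l, hg⟩ := hg
  refine ⟨fun t ht => (fc t ht).add (gc t ht), K + L, by positivity, k + l, fun x t ht => ?_⟩
  have h1 : (1:ℝ) ≤ 1 + ‖x - y‖ := by linarith [norm_nonneg (x - y)]
  calc |f x t + g x t| ≤ |f x t| + |g x t| := abs_add_le _ _
    _ ≤ K * (1 + ‖x - y‖) ^ k + L * (1 + ‖x - y‖) ^ l := add_le_add (hf x t ht) (hg x t ht)
    _ ≤ K * (1 + ‖x - y‖) ^ (k + l) + L * (1 + ‖x - y‖) ^ (k + l) := by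
        gcongr <;> first | exact h1 | omega
    _ = _ := by ring

lemma PG.neg (hf : PG y I f) : PG y I (fun x t => -f x t) := by
  simpa using (PG.const (-1)).mul hf

lemma PG.sub (hf : PG y I f) (hg : PG y I g) : PG y I (fun x t => f x t - g x t) := by
  simpa [sub_eq_add_neg] using hf.add hg.neg

lemma PG.pow (hf : PG y I f) (m : ℕ) : PG y I (fun x t => f x t ^ m) := by
  induction m with
  | zero => simpa using PG.const 1
  | succ m ih => simpa [pow_succ] using ih.mul hf

lemma PG.sum {ι : Type*} (s : Finset ι) {f : ι → EuclideanSpace ℝ (Fin n) → ℝ → ℝ}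
    (hf : ∀ i, PG y I (f i)) : PG y I (fun x t => ∑ i ∈ s, f i x t) := by
  classical
  induction s using Finset.induction_on with
  | empty => simpa using PG.const 0
  | insert a s ha ih => simpa [Finset.sum_insert ha] using (hf a).add ih

lemma PG.coord (i : Fin n) : PG y I (fun x _ => x i - y i) := by
  refine ⟨fun t _ => by fun_prop, 1, zero_le_one, 1, fun x t _ => ?_⟩
  have := PiLp.norm_apply_le (x - y) i
  simp only [PiLp.sub_apply, Real.norm_eq_abs] at this
  simp only [pow_one, one_mul]
  linarith

end

lemma integrable_gauss {n : ℕ} (y : EuclideanSpace ℝ (Fin n)) {b : ℝ} (hb : 0 < b) :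
    Integrable (fun x : EuclideanSpace ℝ (Fin n) => Real.exp (-b * ‖x - y‖ ^ 2)) := by
  have h := GaussianFourier.integrable_cexp_neg_mul_sq_norm_add (V := EuclideanSpace ℝ (Fin n))
    (b := (b : ℂ)) (by simpa using hb) 0 0
  have h2 := h.norm
  have h3 : Integrable (fun x : EuclideanSpace ℝ (Fin n) => Real.exp (-b * ‖x‖ ^ 2)) := by
    refine h2.congr (Filter.Eventually.of_forall fun x => ?_)
    simp only [Complex.norm_exp]
    congr 1
    simp [← Complex.ofReal_pow]
  exact h3.comp_sub_right y

lemma poly_exp_bound {b : ℝ} (hb : 0 < b) (k : ℕ) (r : ℝ) (hr : 0 ≤ r) :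
    (1 + r) ^ k * Real.exp (-(2 * b) * r ^ 2)
      ≤ (k.factorial * Real.exp (1 + 1 / (4 * b))) * Real.exp (-b * r ^ 2) := by
  have h1 : (1 + r) ^ k ≤ k.factorial * Real.exp (1 + r) := by
    have := Real.pow_div_factorial_le_exp (1 + r) (by linarith) k
    rw [div_le_iff₀ (by positivity)] at this
    linarith
  calc (1 + r) ^ k * Real.exp (-(2 * b) * r ^ 2)
      ≤ (k.factorial * Real.exp (1 + r)) * Real.exp (-(2 * b) * r ^ 2) := by gcongr
    _ = k.factorial * (Real.exp (1 + r) * Real.exp (-(2 * b) * r ^ 2)) := by ring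
    _ ≤ k.factorial * (Real.exp (1 + 1 / (4 * b)) * Real.exp (-b * r ^ 2)) := by
        rw [← Real.exp_add, ← Real.exp_add]
        gcongr _ * Real.exp ?_
        have : 0 ≤ b * (r - 1 / (2 * b)) ^ 2 := by positivity
        have h2 : b * (r - 1 / (2 * b)) ^ 2 = b * r ^ 2 - r + 1 / (4 * b) := by
          field_simp; ring
        linarith
    _ = _ := by ring

lemma gauss_le {n : ℕ} (hn : 1 ≤ n) (y x : EuclideanSpace ℝ (Fin n)) {s M τ : ℝ} (hs : 0 < s)
    (h1 : s ≤ τ) (h2 : τ ≤ M) :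
    |gaussianDensity n y τ x| ≤ (4 * Real.pi * s) ^ (-(((n : ℝ) - 1) / 2)) *
      Real.exp (-(2 * (1 / (8 * M))) * ‖x - y‖ ^ 2) := by
  have hτ : 0 < τ := by linarith
  have hM : 0 < M := by linarith
  have hn' : (1:ℝ) ≤ n := by exact_mod_cast hn
  unfold gaussianDensity
  rw [abs_of_nonneg (by positivity)]
  have := Real.pi_pos
  refine mul_le_mul ?_ ?_ (by positivity) (by positivity)
  · exact Real.rpow_le_rpow_of_nonpos (by positivity) (by gcongr) (by linarith)
  · rw [dist_eq_norm]
    gcongr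
    rw [neg_div, neg_mul, neg_le_neg_iff]
    calc 2 * (1 / (8 * M)) * ‖x - y‖ ^ 2 = ‖x - y‖ ^ 2 / (4 * M) := by field_simp; ring
      _ ≤ _ := by gcongr

lemma gauss_cont {n : ℕ} (y : EuclideanSpace ℝ (Fin n)) (τ : ℝ) :
    Continuous (gaussianDensity n y τ) := by
  unfold gaussianDensity
  fun_prop

lemma PG.dom {n : ℕ} (hn : 1 ≤ n) {y : EuclideanSpace ℝ (Fin n)} {s t₁ t₂ : ℝ} (hs : 0 < s)
    (ht : t₁ ≤ t₂)
    {f : EuclideanSpace ℝ (Fin n) → ℝ → ℝ} (hf : PG y (Set.Icc t₁ t₂) f) :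
    ∃ B : EuclideanSpace ℝ (Fin n) → ℝ, Integrable B ∧ ∀ x, ∀ t ∈ Set.Icc t₁ t₂,
      |gaussianDensity n y (s + (t₂ - t)) x * f x t| ≤ B x := by
  obtain ⟨fc, K, hK, k, hf⟩ := hf
  set M := s + (t₂ - t₁) with hM
  have hMp : 0 < M := by linarith
  have hb : 0 < 1 / (8 * M) := by positivity
  set c := (4 * Real.pi * s) ^ (-(((n : ℝ) - 1) / 2)) with hc
  have hcp : 0 ≤ c := by have := Real.pi_pos; positivity
  refine ⟨fun x => (c * K * (k.factorial * Real.exp (1 + 1 / (4 * (1 / (8 * M)))))) *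
    Real.exp (-(1 / (8 * M)) * ‖x - y‖ ^ 2), (integrable_gauss y hb).const_mul _, ?_⟩
  intro x t hI
  have h1 := gauss_le hn y x (M := M) (τ := s + (t₂ - t)) hs (by linarith [hI.2])
    (by linarith [hI.1])
  have h2 := poly_exp_bound hb k ‖x - y‖ (norm_nonneg _)
  rw [abs_mul]
  calc _ ≤ (c * Real.exp (-(2 * (1 / (8 * M))) * ‖x - y‖ ^ 2)) * (K * (1 + ‖x - y‖) ^ k) :=
        mul_le_mul h1 (hf x t hI) (abs_nonneg _) (by positivity)
    _ = c * K * ((1 + ‖x - y‖) ^ k * Real.exp (-(2 * (1 / (8 * M))) * ‖x - y‖ ^ 2)) := by ring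
    _ ≤ c * K * ((k.factorial * Real.exp (1 + 1 / (4 * (1 / (8 * M))))) *
        Real.exp (-(1 / (8 * M)) * ‖x - y‖ ^ 2)) := by gcongr
    _ = _ := by ring

lemma PG.integrable {n : ℕ} (hn : 1 ≤ n) {y : EuclideanSpace ℝ (Fin n)} {s t₁ t₂ : ℝ} (hs : 0 < s)
    (ht : t₁ ≤ t₂)
    {f : EuclideanSpace ℝ (Fin n) → ℝ → ℝ} (hf : PG y (Set.Icc t₁ t₂) f)
    {t : ℝ} (hI : t ∈ Set.Icc t₁ t₂) :
    Integrable (fun x => gaussianDensity n y (s + (t₂ - t)) x * f x t) := by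
  obtain ⟨B, hB, hb⟩ := hf.dom hn hs ht
  refine hB.mono' ((gauss_cont _ _).mul (hf.1 t hI)).aestronglyMeasurable
    (Filter.Eventually.of_forall fun x => ?_)
  exact hb x t hI

lemma integral_antitone {α : Type*} [MeasurableSpace α] {μ : Measure α} {t₁ t₂ : ℝ}
    (ht : t₁ ≤ t₂) (G G' : α → ℝ → ℝ) (B B' : α → ℝ) (hB : Integrable B μ) (hB' : Integrable B' μ)
    (hG : ∀ x, ∀ t ∈ Set.Icc t₁ t₂, |G x t| ≤ B x)
    (hG' : ∀ x, ∀ t ∈ Set.Icc t₁ t₂, |G' x t| ≤ B' x)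
    (hm : ∀ t ∈ Set.Icc t₁ t₂, AEStronglyMeasurable (fun x => G x t) μ)
    (hm' : ∀ t ∈ Set.Icc t₁ t₂, AEStronglyMeasurable (fun x => G' x t) μ)
    (hd : ∀ x, ∀ t ∈ Set.Icc t₁ t₂, HasDerivAt (G x) (G' x t) t)
    (hneg : ∀ t ∈ Set.Icc t₁ t₂, ∫ x, G' x t ∂μ ≤ 0) :
    ∫ x, G x t₂ ∂μ ≤ ∫ x, G x t₁ ∂μ := by
  have key : ∀ t ∈ Set.Ioo t₁ t₂, HasDerivAt (fun t => ∫ x, G x t ∂μ) (∫ x, G' x t ∂μ) t := by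
    intro t hI
    have hI' := Set.Ioo_subset_Icc_self hI
    have hs : Set.Ioo t₁ t₂ ∈ nhds t := Ioo_mem_nhds hI.1 hI.2
    refine (hasDerivAt_integral_of_dominated_loc_of_deriv_le (F := fun t x => G x t)
      (F' := fun t x => G' x t) (bound := B') hs ?_ ?_ (hm' t hI') ?_ hB' ?_).2
    · filter_upwards [hs] with r hr using hm r (Set.Ioo_subset_Icc_self hr)
    · exact hB.mono' (hm t hI') (Filter.Eventually.of_forall fun x => hG x t hI')
    · exact Filter.Eventually.of_forall fun x r hr => hG' x r (Set.Ioo_subset_Icc_self hr)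
    · exact Filter.Eventually.of_forall fun x r hr => hd x r (Set.Ioo_subset_Icc_self hr)
  have hanti : AntitoneOn (fun t => ∫ x, G x t ∂μ) (Set.Icc t₁ t₂) := by
    apply antitoneOn_of_deriv_nonpos (convex_Icc _ _)
    · refine continuousOn_of_dominated (bound := B) hm ?_ hB ?_
      · intro t hI; exact Filter.Eventually.of_forall fun x => hG x t hI
      · exact Filter.Eventually.of_forall fun x t hI => (hd x t hI).continuousAt.continuousWithinAt
    · rw [interior_Icc]
      exact fun t hI => (key t hI).differentiableAt.differentiableWithinAt
    · rw [interior_Icc]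
      intro t hI
      rw [(key t hI).deriv]
      exact hneg t (Set.Ioo_subset_Icc_self hI)
  exact hanti (Set.left_mem_Icc.2 ht) (Set.right_mem_Icc.2 ht) ht

lemma integral_lineDeriv_zero {n : ℕ} {V V' : EuclideanSpace ℝ (Fin n) → ℝ}
    {v : EuclideanSpace ℝ (Fin n)} (hV : Integrable V) (hV' : Integrable V')
    (hd : ∀ x, HasLineDerivAt ℝ V (V' x) x v) : ∫ x, V' x = 0 := by
  have := integral_bilinear_hasLineDerivAt_right_eq_neg_left_of_integrable
    (μ := (volume : Measure (EuclideanSpace ℝ (Fin n)))) (f := fun _ => (1:ℝ)) (f' := fun _ => 0)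
    (g := V) (g' := V') (v := v) (B := ContinuousLinearMap.mul ℝ ℝ) (by simp) (by simpa using hV')
    (by simpa using hV) (fun x _ => by simp [HasLineDerivAt, hasDerivAt_const]) (fun x _ => hd x)
  simpa using this

end ACEntropy
namespace ACEntropy

section LD
variable {n : ℕ} {f g : EuclideanSpace ℝ (Fin n) → ℝ} {f' g' : ℝ}
  {x v : EuclideanSpace ℝ (Fin n)}

lemma LD.mul (hf : HasLineDerivAt ℝ f f' x v) (hg : HasLineDerivAt ℝ g g' x v) :
    HasLineDerivAt ℝ (fun x => f x * g x) (f' * g x + f x * g') x v := by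
  unfold HasLineDerivAt at *
  simpa using HasDerivAt.fun_mul hf hg

lemma LD.add (hf : HasLineDerivAt ℝ f f' x v) (hg : HasLineDerivAt ℝ g g' x v) :
    HasLineDerivAt ℝ (fun x => f x + g x) (f' + g') x v := by
  unfold HasLineDerivAt at *
  exact HasDerivAt.fun_add hf hg

lemma LD.sub (hf : HasLineDerivAt ℝ f f' x v) (hg : HasLineDerivAt ℝ g g' x v) :
    HasLineDerivAt ℝ (fun x => f x - g x) (f' - g') x v := by
  unfold HasLineDerivAt at *
  exact HasDerivAt.fun_sub hf hg

lemma LD.const_mul (c : ℝ) (hf : HasLineDerivAt ℝ f f' x v) :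
    HasLineDerivAt ℝ (fun x => c * f x) (c * f') x v := by
  unfold HasLineDerivAt at *
  exact HasDerivAt.const_mul c hf

lemma LD.const_sub (c : ℝ) (hf : HasLineDerivAt ℝ f f' x v) :
    HasLineDerivAt ℝ (fun x => c - f x) (-f') x v := by
  unfold HasLineDerivAt at *
  exact HasDerivAt.const_sub c hf

lemma LD.sq (hf : HasLineDerivAt ℝ f f' x v) :
    HasLineDerivAt ℝ (fun x => f x ^ 2) (2 * f x * f') x v := by
  have := LD.mul hf hf
  simp only [← pow_two] at this
  convert this using 1; ring

lemma LD.sum {F : Fin n → EuclideanSpace ℝ (Fin n) → ℝ} {F' : Fin n → ℝ}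
    (hf : ∀ i, HasLineDerivAt ℝ (F i) (F' i) x v) :
    HasLineDerivAt ℝ (fun x => ∑ i, F i x) (∑ i, F' i) x v := by
  unfold HasLineDerivAt at *
  exact HasDerivAt.fun_sum (fun i _ => hf i)

end LD

lemma LD.coord {n : ℕ} (x y : EuclideanSpace ℝ (Fin n)) (i j : Fin n) :
    HasLineDerivAt ℝ (fun x : EuclideanSpace ℝ (Fin n) => x j - y j) (if j = i then 1 else 0) x
      (EuclideanSpace.single i (1 : ℝ)) := by
  unfold HasLineDerivAt
  have h : HasDerivAt (fun r : ℝ => x j + r * (if j = i then (1:ℝ) else 0) - y j)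
      (1 * (if j = i then (1:ℝ) else 0)) 0 :=
    (((hasDerivAt_id (0:ℝ)).mul_const _).const_add _).sub_const _
  simpa [Pi.single_apply, -mul_ite] using h

lemma gauss_LD {n : ℕ} (y x : EuclideanSpace ℝ (Fin n)) (τ : ℝ) (hτ : 0 < τ) (i : Fin n) :
    HasLineDerivAt ℝ (gaussianDensity n y τ)
      (gaussianDensity n y τ x * (-(1 / (2 * τ)) * (x i - y i))) x
      (EuclideanSpace.single i (1 : ℝ)) := by
  have h1 : HasLineDerivAt ℝ (fun x : EuclideanSpace ℝ (Fin n) => (dist x y) ^ 2)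
      (2 * (x i - y i)) x (EuclideanSpace.single i (1 : ℝ)) := by
    have h0 := LD.sum (x := x) (v := EuclideanSpace.single i (1 : ℝ))
      (fun j => LD.sq (LD.coord x y i j))
    have e : (fun x : EuclideanSpace ℝ (Fin n) => (dist x y) ^ 2)
        = fun x => ∑ j, (x j - y j) ^ 2 := by
      funext x; simp [dist_eq_norm, EuclideanSpace.norm_sq_eq]
    rw [e]
    simpa using h0
  unfold HasLineDerivAt at h1 ⊢
  unfold gaussianDensity
  have h2 := ((h1.fun_neg.div_const (4 * τ)).exp).const_mul ((4 * Real.pi * τ) ^ (-(((n : ℝ) - 1) / 2)))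
  refine h2.congr_deriv ?_
  simp only [zero_smul, add_zero]
  field_simp
  ring

lemma gauss_time {n : ℕ} (y x : EuclideanSpace ℝ (Fin n)) (s t₂ t : ℝ) (hτ : 0 < s + (t₂ - t)) :
    HasDerivAt (fun t => gaussianDensity n y (s + (t₂ - t)) x)
      (gaussianDensity n y (s + (t₂ - t)) x * (((n : ℝ) - 1) * (1 / (2 * (s + (t₂ - t))))
        - (∑ j, (x j - y j) ^ 2) * (1 / (2 * (s + (t₂ - t)))) ^ 2)) t := by
  have e : ∑ j, (x j - y j) ^ 2 = (dist x y) ^ 2 := by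
    simp [dist_eq_norm, EuclideanSpace.norm_sq_eq]
  rw [e]
  unfold gaussianDensity
  have h1 : HasDerivAt (fun t : ℝ => s + (t₂ - t)) (-1) t :=
    ((hasDerivAt_id t).const_sub t₂).const_add s
  set τ := s + (t₂ - t) with hτd
  have hp := Real.pi_pos
  have h2 := (h1.const_mul (4 * Real.pi)).rpow_const (p := (-(((n : ℝ) - 1) / 2)))
    (Or.inl (by positivity))
  have h3 := ((hasDerivAt_const t (-(dist x y) ^ 2)).fun_div (h1.const_mul 4) (by positivity)).exp
  have h4 := h2.fun_mul h3
  refine h4.congr_deriv ?_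
  simp only [← hτd]
  rw [Real.rpow_sub_one (by positivity)]
  field_simp
  ring

/-- energy density in terms of `U` and its gradient -/
noncomputable def en {n : ℕ} (ε : ℝ) (U : EuclideanSpace ℝ (Fin n) → ℝ → ℝ)
    (a : Fin n → EuclideanSpace ℝ (Fin n) → ℝ → ℝ) (x : EuclideanSpace ℝ (Fin n)) (t : ℝ) : ℝ :=
  (ε / 2) * (∑ j, a j x t ^ 2) + (1 / ε) * ((1 / 2) * (1 - (U x t) ^ 2) ^ 2)

lemma core_alg {n : ℕ} (ε : ℝ) (hε : 0 < ε) (q : ℝ) (hq : 0 ≤ q) (z a wi : Fin n → ℝ)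
    (h : Fin n → Fin n → ℝ) (hsym : ∀ i j, h i j = h j i) (w f e : ℝ)
    (hw : w = (∑ i, h i i) - (1 / ε ^ 2) * f)
    (hd : ε * (∑ j, a j ^ 2) ≤ e) :
    (((n : ℝ) - 1) * q - (∑ j, z j ^ 2) * q ^ 2) * e
        + (ε * (∑ j, a j * wi j) + (1 / ε) * f * w)
      ≤ ∑ i, ((-q * z i) * (ε * (w * a i) - ε * q * ((∑ j, z j * a j) * a i) + q * (e * z i))
        + (ε * (wi i * a i + w * h i i)
          - ε * q * ((a i + ∑ j, z j * h j i) * a i + (∑ j, z j * a j) * h i i)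
          + q * ((ε * (∑ j, a j * h j i) + (1 / ε) * f * a i) * z i + e))) := by
  set Z := ∑ j, z j * a j with hZ
  set A := ∑ j, a j ^ 2 with hA
  set Q := ∑ j, z j ^ 2 with hQ
  set D := ∑ i, h i i with hD
  set S := ∑ j, a j * wi j with hS
  have hcross : ∑ i, (∑ j, z j * h j i) * a i = ∑ i, (∑ j, a j * h j i) * z i := by
    simp_rw [Finset.sum_mul]
    rw [Finset.sum_comm]
    refine Finset.sum_congr rfl fun i _ => Finset.sum_congr rfl fun j _ => ?_
    rw [hsym i j]; ring
  set X := ∑ i, (∑ j, a j * h j i) * z i with hX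
  have hsum : ∑ i, ((-q * z i) * (ε * (w * a i) - ε * q * (Z * a i) + q * (e * z i))
        + (ε * (wi i * a i + w * h i i)
          - ε * q * ((a i + ∑ j, z j * h j i) * a i + Z * h i i)
          + q * ((ε * (∑ j, a j * h j i) + (1 / ε) * f * a i) * z i + e)))
      = -q * ε * w * Z + ε * q ^ 2 * Z * Z - q ^ 2 * e * Q + ε * S + ε * w * D
        - ε * q * A - ε * q * X - ε * q * Z * D + q * ε * X + q * (1 / ε) * f * Z
        + n * (q * e) := by
    have e1 : ∀ i, ((-q * z i) * (ε * (w * a i) - ε * q * (Z * a i) + q * (e * z i))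
        + (ε * (wi i * a i + w * h i i)
          - ε * q * ((a i + ∑ j, z j * h j i) * a i + Z * h i i)
          + q * ((ε * (∑ j, a j * h j i) + (1 / ε) * f * a i) * z i + e)))
      = (-q * ε * w + ε * q ^ 2 * Z + q * (1 / ε) * f) * (z i * a i) + (- q ^ 2 * e) * z i ^ 2
        + ε * (a i * wi i) + (ε * w - ε * q * Z) * h i i - ε * q * a i ^ 2
        - ε * q * ((∑ j, z j * h j i) * a i) + q * ε * ((∑ j, a j * h j i) * z i) + q * e := by
      intro i; ring
    simp_rw [e1]
    simp only [Finset.sum_add_distrib, Finset.sum_sub_distrib, ← Finset.mul_sum, Finset.sum_const,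
      Finset.card_univ, Fintype.card_fin, nsmul_eq_mul]
    rw [hcross]
    ring
  rw [hsum]
  have hD' : D = w + (1 / ε ^ 2) * f := by rw [hw]; ring
  have h1 : 0 ≤ ε * (w - q * Z) ^ 2 := by positivity
  have h2 : 0 ≤ q * (e - ε * A) := mul_nonneg hq (by linarith)
  rw [hD']
  have h3 : ε * (1 / ε ^ 2) = 1 / ε := by field_simp
  have : (-q * ε * w * Z + ε * q ^ 2 * Z * Z - q ^ 2 * e * Q + ε * S
        + ε * w * (w + (1 / ε ^ 2) * f)
        - ε * q * A - ε * q * X - ε * q * Z * (w + (1 / ε ^ 2) * f) + q * ε * X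
        + q * (1 / ε) * f * Z + n * (q * e))
      - ((((n : ℝ) - 1) * q - Q * q ^ 2) * e + (ε * S + (1 / ε) * f * w))
      = ε * (w - q * Z) ^ 2 + q * (e - ε * A) := by
    linear_combination (w * f - q * Z * f) * h3
  linarith

theorem core {n : ℕ} (hn : 1 ≤ n) (ε : ℝ) (hε : 0 < ε) (y : EuclideanSpace ℝ (Fin n))
    (s t₁ t₂ : ℝ) (hs : 0 < s) (ht : t₁ ≤ t₂)
    (U w : EuclideanSpace ℝ (Fin n) → ℝ → ℝ) (a wi : Fin n → EuclideanSpace ℝ (Fin n) → ℝ → ℝ)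
    (h : Fin n → Fin n → EuclideanSpace ℝ (Fin n) → ℝ → ℝ)
    (pU : PG y (Set.Icc t₁ t₂) U) (pw : PG y (Set.Icc t₁ t₂) w)
    (pa : ∀ i, PG y (Set.Icc t₁ t₂) (a i)) (pwi : ∀ i, PG y (Set.Icc t₁ t₂) (wi i))
    (ph : ∀ i j, PG y (Set.Icc t₁ t₂) (h i j))
    (dU : ∀ i x t, HasLineDerivAt ℝ (fun x => U x t) (a i x t) x (EuclideanSpace.single i (1 : ℝ)))
    (da : ∀ i j x t, HasLineDerivAt ℝ (fun x => a i x t) (h i j x t) x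
      (EuclideanSpace.single j (1 : ℝ)))
    (dw : ∀ i x t, HasLineDerivAt ℝ (fun x => w x t) (wi i x t) x (EuclideanSpace.single i (1 : ℝ)))
    (tU : ∀ x t, HasDerivAt (U x) (w x t) t)
    (ta : ∀ i x t, HasDerivAt (a i x) (wi i x t) t)
    (hsym : ∀ i j x t, h i j x t = h j i x t)
    (hpde : ∀ x, ∀ t ∈ Set.Icc t₁ t₂,
      w x t = (∑ i, h i i x t) - (1 / ε ^ 2) * (2 * U x t * ((U x t) ^ 2 - 1)))
    (hdisc : ∀ x, ∀ t ∈ Set.Icc t₁ t₂,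
      ε / 2 * (∑ j, a j x t ^ 2) ≤ (1 / ε) * ((1 / 2) * (1 - (U x t) ^ 2) ^ 2)) :
    ∫ x, gaussianDensity n y (s + (t₂ - t₂)) x * en ε U a x t₂
      ≤ ∫ x, gaussianDensity n y (s + (t₂ - t₁)) x * en ε U a x t₁ := by
  have pz : ∀ i : Fin n, PG y (Set.Icc t₁ t₂) (fun x _ => x i - y i) := fun i => PG.coord i
  have pq : PG y (Set.Icc t₁ t₂) (fun _ t => 1 / (2 * (s + (t₂ - t)))) := by
    refine PG.of_bdd (fun _ _ => continuous_const) (1 / (2 * s)) fun x t hI => ?_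
    have : 0 ≤ t₂ - t := by linarith [hI.2]
    rw [abs_of_nonneg (by positivity)]
    gcongr
    linarith
  have pf : PG y (Set.Icc t₁ t₂) (fun x t => 2 * U x t * ((U x t) ^ 2 - 1)) :=
    ((PG.const 2).mul pU).mul ((pU.pow 2).sub (PG.const 1))
  have pe : PG y (Set.Icc t₁ t₂) (en ε U a) := by
    unfold en
    exact ((PG.const _).mul (PG.sum _ fun j => (pa j).pow 2)).add
      ((PG.const _).mul ((PG.const _).mul (((PG.const 1).sub (pU.pow 2)).pow 2)))
  -- the time derivative
  let g' : EuclideanSpace ℝ (Fin n) → ℝ → ℝ := fun x t =>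
    (((n : ℝ) - 1) * (1 / (2 * (s + (t₂ - t)))) - (∑ j, (x j - y j) ^ 2) *
      (1 / (2 * (s + (t₂ - t)))) ^ 2) * en ε U a x t
      + (ε * (∑ j, a j x t * wi j x t) + (1 / ε) * (2 * U x t * ((U x t) ^ 2 - 1)) * w x t)
  have pg' : PG y (Set.Icc t₁ t₂) g' :=
    ((((PG.const _).mul pq).sub ((PG.sum _ fun j => (pz j).pow 2).mul (pq.pow 2))).mul pe).add
      (((PG.const _).mul (PG.sum _ fun j => (pa j).mul (pwi j))).add
        (((PG.const _).mul pf).mul pw))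
  -- the vector field and its divergence
  let P : Fin n → EuclideanSpace ℝ (Fin n) → ℝ → ℝ := fun i x t =>
    ε * (w x t * a i x t) - ε * (1 / (2 * (s + (t₂ - t)))) *
      ((∑ j, (x j - y j) * a j x t) * a i x t)
      + (1 / (2 * (s + (t₂ - t)))) * (en ε U a x t * (x i - y i))
  let P' : Fin n → EuclideanSpace ℝ (Fin n) → ℝ → ℝ := fun i x t =>
    ε * (wi i x t * a i x t + w x t * h i i x t)
          - ε * (1 / (2 * (s + (t₂ - t)))) * ((a i x t + ∑ j, (x j - y j) * h j i x t) * a i x t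
            + (∑ j, (x j - y j) * a j x t) * h i i x t)
          + (1 / (2 * (s + (t₂ - t)))) * ((ε * (∑ j, a j x t * h j i x t)
            + (1 / ε) * (2 * U x t * ((U x t) ^ 2 - 1)) * a i x t) * (x i - y i) + en ε U a x t)
  have pP : ∀ i, PG y (Set.Icc t₁ t₂) (P i) := fun i =>
    (((PG.const _).mul (pw.mul (pa i))).sub (((PG.const _).mul pq).mul
      ((PG.sum _ fun j => (pz j).mul (pa j)).mul (pa i)))).add (pq.mul (pe.mul (pz i)))
  have pP' : ∀ i, PG y (Set.Icc t₁ t₂) (P' i) := fun i =>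
    (((PG.const _).mul (((pwi i).mul (pa i)).add (pw.mul (ph i i)))).sub (((PG.const _).mul pq).mul
      ((((pa i).add (PG.sum _ fun j => (pz j).mul (ph j i))).mul (pa i)).add
        ((PG.sum _ fun j => (pz j).mul (pa j)).mul (ph i i))))).add
      (pq.mul (((((PG.const _).mul (PG.sum _ fun j => (pa j).mul (ph j i))).add
        (((PG.const _).mul pf).mul (pa i))).mul (pz i)).add pe))
  let dv : Fin n → EuclideanSpace ℝ (Fin n) → ℝ → ℝ := fun i x t =>
    (-(1 / (2 * (s + (t₂ - t)))) * (x i - y i)) * P i x t + P' i x t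
  have pdv : ∀ i, PG y (Set.Icc t₁ t₂) (dv i) := fun i =>
    ((pq.neg.mul (pz i)).mul (pP i)).add (pP' i)
  have hen : ∀ i x t, HasLineDerivAt ℝ (fun x => en ε U a x t)
      (ε * (∑ j, a j x t * h j i x t) + (1 / ε) * (2 * U x t * ((U x t) ^ 2 - 1)) * a i x t) x
      (EuclideanSpace.single i (1 : ℝ)) := by
    intro i x t
    have := LD.add (LD.const_mul (ε / 2) (LD.sum fun j => LD.sq (da j i x t)))
      (LD.const_mul (1 / ε) (LD.const_mul (1 / 2) (LD.sq (LD.const_sub 1 (LD.sq (dU i x t))))))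
    unfold en
    convert this using 1
    simp_rw [mul_assoc]
    rw [← Finset.mul_sum]
    ring
  have hP : ∀ i x t, HasLineDerivAt ℝ (fun x => P i x t) (P' i x t) x
      (EuclideanSpace.single i (1 : ℝ)) := by
    intro i x t
    have := LD.add (LD.sub (LD.const_mul ε (LD.mul (dw i x t) (da i i x t)))
      (LD.const_mul (ε * (1 / (2 * (s + (t₂ - t))))) (LD.mul (LD.sum fun j =>
        LD.mul (LD.coord x y i j) (da j i x t)) (da i i x t))))
      (LD.const_mul (1 / (2 * (s + (t₂ - t)))) (LD.mul (hen i x t) (LD.coord x y i i)))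
    convert this using 1
    simp only [P', Finset.sum_add_distrib, ite_mul, one_mul, zero_mul, Finset.sum_ite_eq',
      Finset.mem_univ, if_true, mul_one]
  have hV : ∀ i x, ∀ t ∈ Set.Icc t₁ t₂,
      HasLineDerivAt ℝ (fun x => gaussianDensity n y (s + (t₂ - t)) x * P i x t)
      (gaussianDensity n y (s + (t₂ - t)) x * dv i x t) x (EuclideanSpace.single i (1 : ℝ)) := by
    intro i x t hI
    have := LD.mul (gauss_LD y x (s + (t₂ - t)) (by linarith [hI.2]) i) (hP i x t)
    convert this using 1
    simp only [dv]
    ring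
  obtain ⟨B, hB, hb⟩ := pe.dom hn hs ht
  obtain ⟨B', hB', hb'⟩ := pg'.dom hn hs ht
  refine integral_antitone ht (fun x t => gaussianDensity n y (s + (t₂ - t)) x * en ε U a x t)
    (fun x t => gaussianDensity n y (s + (t₂ - t)) x * g' x t) B B' hB hB' hb hb'
    (fun t hI => (pe.integrable hn hs ht hI).aestronglyMeasurable)
    (fun t hI => (pg'.integrable hn hs ht hI).aestronglyMeasurable) ?_ ?_
  · intro x t hI
    have h1 := gauss_time y x s t₂ t (by linarith [hI.2])
    have h2 : HasDerivAt (en ε U a x) (ε * (∑ j, a j x t * wi j x t)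
        + (1 / ε) * (2 * U x t * ((U x t) ^ 2 - 1)) * w x t) t := by
      have := ((HasDerivAt.fun_sum (u := Finset.univ) fun j _ =>
        (ta j x t).fun_pow 2).const_mul (ε / 2)).fun_add
        ((((((tU x t).fun_pow 2).const_sub 1).fun_pow 2).const_mul (1 / 2)).const_mul (1 / ε))
      refine this.congr_deriv ?_
      simp only [Nat.cast_ofNat, Nat.add_one_sub_one, pow_one, mul_assoc]
      rw [← Finset.mul_sum]
      ring
    have h3 := h1.fun_mul h2
    refine h3.congr_deriv ?_
    simp only [g']
    ring
  · intro t hI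
    have hle : ∀ x, gaussianDensity n y (s + (t₂ - t)) x * g' x t
        ≤ ∑ i, gaussianDensity n y (s + (t₂ - t)) x * dv i x t := by
      intro x
      have hτ : 0 < s + (t₂ - t) := by linarith [hI.2]
      rw [← Finset.mul_sum]
      refine mul_le_mul_of_nonneg_left ?_ ?_
      · refine core_alg ε hε (1 / (2 * (s + (t₂ - t)))) (by positivity) (fun i => x i - y i)
          (fun i => a i x t) (fun i => wi i x t) (fun i j => h i j x t)
          (fun i j => hsym i j x t) (w x t) _ (en ε U a x t) (hpde x t hI) ?_
        have := hdisc x t hI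
        unfold en
        linarith
      · have := Real.pi_pos
        unfold gaussianDensity; positivity
    calc ∫ x, gaussianDensity n y (s + (t₂ - t)) x * g' x t
        ≤ ∫ x, ∑ i, gaussianDensity n y (s + (t₂ - t)) x * dv i x t :=
          integral_mono (pg'.integrable hn hs ht hI)
            (integrable_finsetSum _ fun i _ => (pdv i).integrable hn hs ht hI) hle
      _ = ∑ i, ∫ x, gaussianDensity n y (s + (t₂ - t)) x * dv i x t :=
          integral_finsetSum _ fun i _ => (pdv i).integrable hn hs ht hI
      _ = 0 := Finset.sum_eq_zero fun i _ =>
          integral_lineDeriv_zero ((pP i).integrable hn hs ht hI)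
            ((pdv i).integrable hn hs ht hI) (fun x => hV i x t hI)
      _ ≤ 0 := le_rfl

end ACEntropy
namespace ACEntropy

section Dv
variable {n : ℕ}

/-- directional derivative in space-time -/
noncomputable def Dv (v : EuclideanSpace ℝ (Fin n) × ℝ) (f : EuclideanSpace ℝ (Fin n) × ℝ → ℝ) :
    EuclideanSpace ℝ (Fin n) × ℝ → ℝ := fun p => fderiv ℝ f p v

variable {f : EuclideanSpace ℝ (Fin n) × ℝ → ℝ}

lemma Dv_smooth (hf : ContDiff ℝ (⊤ : ℕ∞) f) (v : EuclideanSpace ℝ (Fin n) × ℝ) :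
    ContDiff ℝ (⊤ : ℕ∞) (Dv v f) := by
  unfold Dv
  have : ContDiff ℝ (⊤ : ℕ∞) (fderiv ℝ f) := hf.fderiv_right (by simp)
  exact this.clm_apply contDiff_const

lemma Dv_hasFDeriv (hf : ContDiff ℝ (⊤ : ℕ∞) f) (p : EuclideanSpace ℝ (Fin n) × ℝ) :
    HasFDerivAt f (fderiv ℝ f p) p :=
  (hf.differentiable (by simp) p).hasFDerivAt

lemma Dv_time (hf : ContDiff ℝ (⊤ : ℕ∞) f) (x : EuclideanSpace ℝ (Fin n)) (t : ℝ) :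
    HasDerivAt (fun t => f (x, t)) (Dv (0, 1) f (x, t)) t := by
  have h := (Dv_hasFDeriv hf (x, t)).comp_hasDerivAt t
    ((hasDerivAt_const t x).prodMk (hasDerivAt_id t))
  exact h

lemma Dv_space (hf : ContDiff ℝ (⊤ : ℕ∞) f) (x : EuclideanSpace ℝ (Fin n)) (t : ℝ) :
    HasFDerivAt (fun x => f (x, t))
      ((fderiv ℝ f (x, t)).comp (ContinuousLinearMap.inl ℝ (EuclideanSpace ℝ (Fin n)) ℝ)) x :=
  (Dv_hasFDeriv hf (x, t)).comp x (hasFDerivAt_prodMk_left x t)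

lemma Dv_line (hf : ContDiff ℝ (⊤ : ℕ∞) f) (v x : EuclideanSpace ℝ (Fin n)) (t : ℝ) :
    HasLineDerivAt ℝ (fun x => f (x, t)) (Dv (v, 0) f (x, t)) x v := by
  have := (Dv_space hf x t).hasLineDerivAt v
  simpa [Dv] using this

lemma Dv_fderiv (hf : ContDiff ℝ (⊤ : ℕ∞) f) (v x : EuclideanSpace ℝ (Fin n)) (t : ℝ) :
    fderiv ℝ (fun x => f (x, t)) x v = Dv (v, 0) f (x, t) := by
  rw [(Dv_space hf x t).fderiv]
  simp [Dv]

lemma Dv_comm (hf : ContDiff ℝ (⊤ : ℕ∞) f) (v w p : EuclideanSpace ℝ (Fin n) × ℝ) :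
    Dv v (Dv w f) p = Dv w (Dv v f) p := by
  have h1 : ContDiff ℝ (⊤ : ℕ∞) (fderiv ℝ f) := hf.fderiv_right (by simp)
  have h2 : HasFDerivAt (fderiv ℝ f) (fderiv ℝ (fderiv ℝ f) p) p :=
    (h1.differentiable (by simp) p).hasFDerivAt
  have h3 := second_derivative_symmetric (fun q => Dv_hasFDeriv hf q) h2 v w
  have key : ∀ w : EuclideanSpace ℝ (Fin n) × ℝ,
      fderiv ℝ (fun q => fderiv ℝ f q w) p = (fderiv ℝ (fderiv ℝ f) p).flip w := by
    intro w
    have := h2.clm_apply (hasFDerivAt_const w p)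
    rw [this.fderiv]
    ext <;> simp
  unfold Dv
  rw [key, key]
  exact h3

lemma slice_smooth (hf : ContDiff ℝ (⊤ : ℕ∞) f) (t : ℝ) :
    ContDiff ℝ (⊤ : ℕ∞) (fun x => f (x, t)) :=
  hf.comp (contDiff_id.prodMk contDiff_const)

lemma Dv_bound (hf : ContDiff ℝ (⊤ : ℕ∞) f) (i : Fin n) (x : EuclideanSpace ℝ (Fin n)) (t : ℝ)
    (k : ℕ) :
    ‖iteratedFDeriv ℝ k (fun x => Dv (EuclideanSpace.single i (1 : ℝ), 0) f (x, t)) x‖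
      ≤ ‖iteratedFDeriv ℝ (k + 1) (fun x => f (x, t)) x‖ := by
  have e : (fun x => Dv (EuclideanSpace.single i (1 : ℝ), 0) f (x, t))
      = fun x => fderiv ℝ (fun x => f (x, t)) x (EuclideanSpace.single i (1 : ℝ)) := by
    funext x; rw [Dv_fderiv hf]
  rw [e, ← norm_iteratedFDeriv_fderiv]
  have h1 : ContDiff ℝ (⊤ : ℕ∞) (fderiv ℝ (fun x => f (x, t))) :=
    (slice_smooth hf t).fderiv_right (by simp)
  have := norm_iteratedFDeriv_clm_apply_const (c := EuclideanSpace.single i (1 : ℝ)) (n := k)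
    (h1.contDiffAt (x := x)) (by exact_mod_cast le_top)
  simpa using this

lemma gradient_norm_sq (g : EuclideanSpace ℝ (Fin n) → ℝ) (x : EuclideanSpace ℝ (Fin n)) :
    ‖gradient g x‖ ^ 2 = ∑ j, (fderiv ℝ g x (EuclideanSpace.single j (1 : ℝ))) ^ 2 := by
  rw [EuclideanSpace.norm_sq_eq]
  refine Finset.sum_congr rfl fun j _ => ?_
  rw [← toDual_gradient]
  rw [InnerProductSpace.toDual_apply_apply, EuclideanSpace.inner_single_right]
  simp

end Dv

end ACEntropy

open ACEntropy
/-- Monotonicity of local entropy under the Allen–Cahn flow on `ℝⁿ` with nonpositive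
discrepancy: for every `T > 0` and all `0 ≤ t₁ ≤ t₂`,
`λ^{(0,T)}(μ^{t₂}) ≤ λ^{(0,T+(t₂-t₁))}(μ^{t₁})`. -/
theorem allen_cahn_local_entropy_monotone (n : ℕ) (hn : 1 ≤ n) (ε : ℝ) (hε : 0 < ε)
    (u : EuclideanSpace ℝ (Fin n) → ℝ → ℝ)
    (hsmooth : ContDiff ℝ (⊤ : ℕ∞) (fun p : EuclideanSpace ℝ (Fin n) × ℝ => u p.1 p.2))
    (hu1 : ∀ x t, |u x t| ≤ 1)
    (hpde : ∀ x, ∀ t, 0 ≤ t →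
      deriv (u x) t = spaceLaplacian n (fun y => u y t) x
        - (1 / ε ^ 2) * (2 * u x t * ((u x t) ^ 2 - 1)))
    (hbnd : ∀ T > (0 : ℝ), ∃ C : ℝ, ∀ x, ∀ t ∈ Set.Icc (0 : ℝ) T,
      (∀ i ≤ 3, ‖iteratedFDeriv ℝ i (fun y => u y t) x‖ ≤ C) ∧ |deriv (u x) t| ≤ C)
    (μ : ℝ → Measure (EuclideanSpace ℝ (Fin n)))
    (hμ : ∀ t, μ t = volume.withDensity (fun x =>
      ENNReal.ofReal ((ε / 2) * ‖gradient (fun y => u y t) x‖ ^ 2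
        + (1 / ε) * ((1 / 2) * (1 - (u x t) ^ 2) ^ 2))))
    (hdisc : ∀ x, ∀ t, 0 ≤ t →
      (ε / 2) * ‖gradient (fun y => u y t) x‖ ^ 2
        ≤ (1 / ε) * ((1 / 2) * (1 - (u x t) ^ 2) ^ 2)) :
    ∀ T > (0 : ℝ), ∀ t₁ t₂ : ℝ, 0 ≤ t₁ → t₁ ≤ t₂ →
      localEntropy n T (μ t₂) ≤ localEntropy n (T + (t₂ - t₁)) (μ t₁) := by
  intro T hT t₁ t₂ ht₁ ht
  set W : EuclideanSpace ℝ (Fin n) × ℝ → ℝ := fun p => u p.1 p.2 with hW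
  set b : Fin n → EuclideanSpace ℝ (Fin n) × ℝ := fun i => (EuclideanSpace.single i (1 : ℝ), 0)
    with hb
  let U : EuclideanSpace ℝ (Fin n) → ℝ → ℝ := u
  let w : EuclideanSpace ℝ (Fin n) → ℝ → ℝ := fun x t => Dv (0, 1) W (x, t)
  let a : Fin n → EuclideanSpace ℝ (Fin n) → ℝ → ℝ := fun i x t => Dv (b i) W (x, t)
  let h : Fin n → Fin n → EuclideanSpace ℝ (Fin n) → ℝ → ℝ :=
    fun i j x t => Dv (b j) (Dv (b i) W) (x, t)
  let wi : Fin n → EuclideanSpace ℝ (Fin n) → ℝ → ℝ :=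
    fun i x t => Dv (b i) (Dv (0, 1) W) (x, t)
  have sa : ∀ i, ContDiff ℝ (⊤ : ℕ∞) (Dv (b i) W) := fun i => Dv_smooth hsmooth _
  have sw : ContDiff ℝ (⊤ : ℕ∞) (Dv (0, 1) W) := Dv_smooth hsmooth _
  have sh : ∀ i j, ContDiff ℝ (⊤ : ℕ∞) (Dv (b j) (Dv (b i) W)) := fun i j => Dv_smooth (sa i) _
  have hgrad : ∀ x t, ‖gradient (fun y => u y t) x‖ ^ 2 = ∑ j, a j x t ^ 2 := by
    intro x t
    rw [gradient_norm_sq]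
    exact Finset.sum_congr rfl fun j _ => by
      rw [show fderiv ℝ (fun y => u y t) x (EuclideanSpace.single j (1 : ℝ)) = a j x t from
        Dv_fderiv hsmooth _ x t]
  have hlap : ∀ x t, spaceLaplacian n (fun y => u y t) x = ∑ i, h i i x t := by
    intro x t
    refine Finset.sum_congr rfl fun i _ => ?_
    have e : (fun y => fderiv ℝ (fun y => u y t) y (EuclideanSpace.single i (1 : ℝ)))
        = fun y => Dv (b i) W (y, t) := by
      funext y; exact Dv_fderiv hsmooth _ y t
    rw [e]
    exact Dv_fderiv (sa i) _ x t
  have hwd : ∀ x t, deriv (u x) t = w x t := fun x t => (Dv_time hsmooth x t).deriv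
  have pde : ∀ x t, 0 ≤ t →
      w x t = (∑ i, h i i x t) - (1 / ε ^ 2) * (2 * U x t * ((U x t) ^ 2 - 1)) := by
    intro x t h0
    rw [← hwd, hpde x t h0, hlap]
  obtain ⟨C, hC⟩ := hbnd (t₂ + 1) (by linarith)
  have memI : ∀ t ∈ Set.Icc t₁ t₂, t ∈ Set.Icc 0 (t₂ + 1) := fun t hI =>
    ⟨by linarith [hI.1], by linarith [hI.2]⟩
  have ba : ∀ i x, ∀ t ∈ Set.Icc t₁ t₂, |a i x t| ≤ C := by
    intro i x t hI
    have h1 := Dv_bound hsmooth i x t 0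
    rw [norm_iteratedFDeriv_zero] at h1
    exact h1.trans ((hC x t (memI t hI)).1 1 (by norm_num))
  have bh : ∀ i j x, ∀ t ∈ Set.Icc t₁ t₂, |h i j x t| ≤ C := by
    intro i j x t hI
    have h1 := Dv_bound (sa i) j x t 0
    rw [norm_iteratedFDeriv_zero] at h1
    exact (h1.trans (Dv_bound hsmooth i x t 1)).trans ((hC x t (memI t hI)).1 2 (by norm_num))
  have b3 : ∀ i j k x, ∀ t ∈ Set.Icc t₁ t₂, |Dv (b k) (Dv (b j) (Dv (b i) W)) (x, t)| ≤ C := by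
    intro i j k x t hI
    have h1 := Dv_bound (sh i j) k x t 0
    rw [norm_iteratedFDeriv_zero] at h1
    exact ((h1.trans (Dv_bound (sa i) j x t 1)).trans (Dv_bound hsmooth i x t 2)).trans
      ((hC x t (memI t hI)).1 3 (by norm_num))
  have cont : ∀ {f : EuclideanSpace ℝ (Fin n) × ℝ → ℝ}, ContDiff ℝ (⊤ : ℕ∞) f →
      ∀ t ∈ Set.Icc t₁ t₂, Continuous fun x => f (x, t) := fun hf t _ =>
    (slice_smooth hf t).continuous
  have contU : ∀ t ∈ Set.Icc t₁ t₂, Continuous fun x => U x t := cont hsmooth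
  have hwi : ∀ i x, ∀ t ∈ Set.Icc t₁ t₂, wi i x t
      = (∑ j, Dv (b i) (Dv (b j) (Dv (b j) W)) (x, t))
        - (1 / ε ^ 2) * ((2 * a i x t) * ((U x t) ^ 2 - 1) + (2 * U x t) * (2 * U x t * a i x t)) := by
    intro i x t hI
    have h1 : HasLineDerivAt ℝ (fun x => w x t) (wi i x t) x (EuclideanSpace.single i (1 : ℝ)) :=
      Dv_line sw _ x t
    have dU : HasLineDerivAt ℝ (fun x => U x t) (a i x t) x (EuclideanSpace.single i (1 : ℝ)) :=
      Dv_line hsmooth _ x t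
    have hsq : HasLineDerivAt ℝ (fun x => U x t ^ 2 - 1) (2 * U x t * a i x t) x
        (EuclideanSpace.single i (1 : ℝ)) := by
      have := LD.sq dU
      unfold HasLineDerivAt at this ⊢
      exact this.sub_const 1
    have h2 := LD.sub (LD.sum fun j => Dv_line (sh j j) (EuclideanSpace.single i (1 : ℝ)) x t)
      (LD.const_mul (1 / ε ^ 2) (LD.mul (LD.const_mul 2 dU) hsq))
    have e : (fun x => w x t) = fun x => (∑ j, Dv (b j) (Dv (b j) W) (x, t))
        - (1 / ε ^ 2) * (2 * U x t * ((U x t) ^ 2 - 1)) := by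
      funext x; exact pde x t (by linarith [hI.1])
    rw [e] at h1
    exact HasDerivAt.unique h1 h2
  unfold localEntropy
  refine iSup_le fun y => iSup_le fun s => iSup_le fun hs => iSup_le fun hsT => ?_
  refine le_iSup_of_le y (le_iSup_of_le (s + (t₂ - t₁)) (le_iSup_of_le (by linarith)
    (le_iSup_of_le (by linarith) ?_)))
  have pU : PG y (Set.Icc t₁ t₂) U := PG.of_bdd contU 1 fun x t _ => hu1 x t
  have pw : PG y (Set.Icc t₁ t₂) w := PG.of_bdd (cont sw) C fun x t hI => by
    rw [← hwd]; exact (hC x t (memI t hI)).2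
  have pa : ∀ i, PG y (Set.Icc t₁ t₂) (a i) := fun i => PG.of_bdd (cont (sa i)) C (ba i)
  have ph : ∀ i j, PG y (Set.Icc t₁ t₂) (h i j) := fun i j =>
    PG.of_bdd (cont (sh i j)) C (bh i j)
  have pwi : ∀ i, PG y (Set.Icc t₁ t₂) (wi i) := by
    intro i
    have p3 : PG y (Set.Icc t₁ t₂) (fun x t => (∑ j, Dv (b i) (Dv (b j) (Dv (b j) W)) (x, t))
        - (1 / ε ^ 2) * ((2 * a i x t) * ((U x t) ^ 2 - 1)
          + (2 * U x t) * (2 * U x t * a i x t))) :=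
      (PG.sum _ fun j => PG.of_bdd (cont (Dv_smooth (sh j j) _)) C (b3 j j i)).sub
        ((PG.const _).mul ((((PG.const 2).mul (pa i)).mul ((pU.pow 2).sub (PG.const 1))).add
          (((PG.const 2).mul pU).mul (((PG.const 2).mul pU).mul (pa i)))))
    refine ⟨cont (Dv_smooth sw _), ?_⟩
    obtain ⟨-, K, hK, k, hk⟩ := p3
    exact ⟨K, hK, k, fun x t hI => by rw [hwi i x t hI]; exact hk x t hI⟩
  have main := core hn ε hε y s t₁ t₂ hs ht U w a wi h pU pw pa pwi ph
    (fun i x t => Dv_line hsmooth _ x t) (fun i j x t => Dv_line (sa i) _ x t)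
    (fun i x t => Dv_line sw _ x t) (fun x t => Dv_time hsmooth x t)
    (fun i x t => (Dv_time (sa i) x t).congr_deriv (Dv_comm hsmooth _ _ _))
    (fun i j x t => Dv_comm hsmooth _ _ _) (fun x t hI => pde x t (by linarith [hI.1]))
    (fun x t hI => by rw [← hgrad]; exact hdisc x t (by linarith [hI.1]))
  have pe : PG y (Set.Icc t₁ t₂) (en ε U a) := by
    unfold en
    exact ((PG.const _).mul (PG.sum _ fun j => (pa j).pow 2)).add
      ((PG.const _).mul ((PG.const _).mul (((PG.const 1).sub (pU.pow 2)).pow 2)))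
  have conv : ∀ t ∈ Set.Icc t₁ t₂,
      ∫⁻ x, ENNReal.ofReal (gaussianDensity n y (s + (t₂ - t)) x) ∂(μ t)
        = ENNReal.ofReal (∫ x, gaussianDensity n y (s + (t₂ - t)) x * en ε U a x t) := by
    intro t hI
    have hτ : 0 < s + (t₂ - t) := by linarith [hI.2]
    have hρ : ∀ x, 0 ≤ gaussianDensity n y (s + (t₂ - t)) x := by
      intro x
      have := Real.pi_pos
      unfold gaussianDensity; positivity
    have he : ∀ x, 0 ≤ en ε U a x t := by
      intro x; unfold en; positivity
    have hd : (fun x => ENNReal.ofReal ((ε / 2) * ‖gradient (fun y => u y t) x‖ ^ 2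
        + (1 / ε) * ((1 / 2) * (1 - (u x t) ^ 2) ^ 2))) = fun x => ENNReal.ofReal (en ε U a x t) := by
      funext x; rw [hgrad]; rfl
    rw [hμ, hd, lintegral_withDensity_eq_lintegral_mul _
      (pe.1 t hI).measurable.ennreal_ofReal (gauss_cont y _).measurable.ennreal_ofReal,
      ofReal_integral_eq_lintegral_ofReal (pe.integrable hn hs ht hI)
        (Filter.Eventually.of_forall fun x => mul_nonneg (hρ x) (he x))]
    refine lintegral_congr fun x => ?_
    rw [ENNReal.ofReal_mul (hρ x), mul_comm]
    rfl
  have c1 := conv t₁ (Set.left_mem_Icc.2 ht)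
  have c2 := conv t₂ (Set.right_mem_Icc.2 ht)
  rw [sub_self, add_zero] at c2 main
  rw [c1, c2]
  exact ENNReal.ofReal_le_ofReal main
end

section
/- Fix n ≥ 1 and ε > 0, and let u : ℝⁿ × [0,∞) → ℝ be a smooth solution of ∂ₜu = Δu − (1/ε²) f(u) with f(u) = 2u(u²−1), |u| ≤ 1, such that for every T > 0 the function u and its spatial derivatives up to third order and its time derivative are uniformly bounded on ℝⁿ × [0,T]. Let μᵗ denote the measure with density (ε/2)|∇u(x,t)|² + (1/ε)F(u(x,t)) with respect to Lebesgue measure, F(u) = (1/2)(1−u²)². Assume (ε/2)|∇u(x,t)|² ≤ (1/ε)F(u(x,t)) for all x ∈ ℝⁿ and t ≥ 0, and that sup_{x ∈ ℝⁿ, R > 0} μ⁰(B_R(x))/R^{n−1} < ∞. Then there is a constant C > 0 depending only on n such that for all t ≥ 0, sup_{x ∈ ℝⁿ, R > 0} μᵗ(B_R(x))/R^{n−1} ≤ C · sup_{x ∈ ℝⁿ, R > 0} μ⁰(B_R(x))/R^{n−1}. -/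
open Real MeasureTheory Metric ENNReal

/-- `sup_{x ∈ ℝⁿ, R > 0} μ(B_R(x)) / R^{n-1}`, the optimal `(n-1)`-dimensional area growth
ratio of a measure on `ℝⁿ`. -/
noncomputable def areaRatio (n : ℕ) (μ : Measure (EuclideanSpace ℝ (Fin n))) : ℝ≥0∞ :=
  ⨆ (x : EuclideanSpace ℝ (Fin n)) (R : ℝ) (_ : 0 < R),
    μ (Metric.ball x R) / ENNReal.ofReal (R ^ ((n : ℝ) - 1))

namespace AC

/-- Directional derivative on space-time. -/
noncomputable def DD {n : ℕ} (v : EuclideanSpace ℝ (Fin n) × ℝ)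
    (g : EuclideanSpace ℝ (Fin n) × ℝ → ℝ) : EuclideanSpace ℝ (Fin n) × ℝ → ℝ :=
  fun p => fderiv ℝ g p v

/-- Space coordinate direction. -/
noncomputable def ei {n : ℕ} (i : Fin n) : EuclideanSpace ℝ (Fin n) × ℝ :=
  (EuclideanSpace.single i (1 : ℝ), 0)

/-- Time direction. -/
noncomputable def et {n : ℕ} : EuclideanSpace ℝ (Fin n) × ℝ := (0, 1)

lemma DD_contDiff {n : ℕ} (v : EuclideanSpace ℝ (Fin n) × ℝ)
    {g : EuclideanSpace ℝ (Fin n) × ℝ → ℝ} (hg : ContDiff ℝ (⊤ : ℕ∞) g) :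
    ContDiff ℝ (⊤ : ℕ∞) (DD v g) := by
  unfold DD
  exact (hg.fderiv_right (m := (⊤ : ℕ∞)) (by simp)).clm_apply contDiff_const

lemma cd_diff {n : ℕ} {g : EuclideanSpace ℝ (Fin n) × ℝ → ℝ} (hg : ContDiff ℝ (⊤ : ℕ∞) g) :
    Differentiable ℝ g := hg.differentiable (by simp)

lemma DD_comm {n : ℕ} (v w : EuclideanSpace ℝ (Fin n) × ℝ)
    {g : EuclideanSpace ℝ (Fin n) × ℝ → ℝ} (hg : ContDiff ℝ (⊤ : ℕ∞) g)
    (p : EuclideanSpace ℝ (Fin n) × ℝ) :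
    DD v (DD w g) p = DD w (DD v g) p := by
  have h1 : ∀ a b, DD a (DD b g) p = fderiv ℝ (fderiv ℝ g) p a b := by
    intro a b
    have hd : DifferentiableAt ℝ (fderiv ℝ g) p :=
      (hg.fderiv_right (m := (⊤ : ℕ∞)) (by simp)).differentiable (by simp) p
    unfold DD
    rw [fderiv_clm_apply hd (differentiableAt_const _)]
    simp
  rw [h1, h1]
  have := (hg.contDiffAt (x := p)).isSymmSndFDerivAt
    (by simp only [minSmoothness_of_isRCLikeNormedField]; exact WithTop.coe_le_coe.2 (le_top : (2 : ℕ∞) ≤ ⊤))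
  exact this v w

lemma DD_space {n : ℕ} {g : EuclideanSpace ℝ (Fin n) × ℝ → ℝ} (hg : ContDiff ℝ (⊤ : ℕ∞) g)
    (x v : EuclideanSpace ℝ (Fin n)) (t : ℝ) :
    HasDerivAt (fun r : ℝ => g (x + r • v, t)) (DD (v, 0) g (x, t)) 0 := by
  have h : HasDerivAt (fun r : ℝ => ((x + r • v, t) : EuclideanSpace ℝ (Fin n) × ℝ)) (v, 0) 0 := by
    have h1 : HasDerivAt (fun r : ℝ => x + r • v) v 0 := by
      simpa using ((hasDerivAt_id (0 : ℝ)).smul_const v).const_add x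
    exact h1.prodMk (hasDerivAt_const _ _)
  have hg' : HasFDerivAt g (fderiv ℝ g (x, t)) ((x + (0 : ℝ) • v, t)) := by
    simpa using (cd_diff hg (x, t)).hasFDerivAt
  exact hg'.comp_hasDerivAt (0 : ℝ) h

lemma DD_time {n : ℕ} {g : EuclideanSpace ℝ (Fin n) × ℝ → ℝ} (hg : ContDiff ℝ (⊤ : ℕ∞) g)
    (x : EuclideanSpace ℝ (Fin n)) (t : ℝ) :
    HasDerivAt (fun r : ℝ => g (x, r)) (DD et g (x, t)) t := by
  have h : HasDerivAt (fun r : ℝ => ((x, r) : EuclideanSpace ℝ (Fin n) × ℝ)) (0, 1) t :=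
    (hasDerivAt_const _ _).prodMk (hasDerivAt_id _)
  exact (cd_diff hg (x, t)).hasFDerivAt.comp_hasDerivAt t h

lemma DD_slice {n : ℕ} {g : EuclideanSpace ℝ (Fin n) × ℝ → ℝ} (hg : ContDiff ℝ (⊤ : ℕ∞) g)
    (x v : EuclideanSpace ℝ (Fin n)) (t : ℝ) :
    fderiv ℝ (fun y => g (y, t)) x v = DD (v, 0) g (x, t) := by
  have h : HasFDerivAt (fun y : EuclideanSpace ℝ (Fin n) => (y, t))
      (ContinuousLinearMap.inl ℝ (EuclideanSpace ℝ (Fin n)) ℝ) x := by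
    exact hasFDerivAt_prodMk_left x t
  have := ((cd_diff hg (x, t)).hasFDerivAt.comp x h).fderiv
  have h2 : fderiv ℝ (fun y => g (y, t)) x = (fderiv ℝ g (x, t)).comp
    (ContinuousLinearMap.inl ℝ (EuclideanSpace ℝ (Fin n)) ℝ) := this
  rw [h2]; simp [DD]

lemma slice_contDiff {n : ℕ} {g : EuclideanSpace ℝ (Fin n) × ℝ → ℝ}
    (hg : ContDiff ℝ (⊤ : ℕ∞) g) (t : ℝ) :
    ContDiff ℝ (⊤ : ℕ∞) (fun y => g (y, t)) := by
  exact hg.comp (contDiff_id.prodMk contDiff_const)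

/-- iterated derivatives of a directional derivative -/
lemma DD_iter {n : ℕ} {g : EuclideanSpace ℝ (Fin n) × ℝ → ℝ} (hg : ContDiff ℝ (⊤ : ℕ∞) g)
    (x : EuclideanSpace ℝ (Fin n)) (t : ℝ) (i : Fin n) (k : ℕ) :
    ‖iteratedFDeriv ℝ k (fun y => DD (ei i) g (y, t)) x‖ ≤
      ‖iteratedFDeriv ℝ (k + 1) (fun y => g (y, t)) x‖ := by
  have h1 : (fun y => DD (ei i) g (y, t)) =
      fun y => fderiv ℝ (fun y => g (y, t)) y (EuclideanSpace.single i (1 : ℝ)) := by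
    funext y; rw [DD_slice hg]; rfl
  rw [h1, ← norm_iteratedFDeriv_fderiv]
  have h2 : ContDiffAt ℝ (⊤ : ℕ∞) (fderiv ℝ (fun y => g (y, t))) x :=
    ((slice_contDiff hg t).fderiv_right (m := (⊤ : ℕ∞)) (by simp)).contDiffAt
  have := norm_iteratedFDeriv_clm_apply_const (c := EuclideanSpace.single i (1 : ℝ)) h2 (n := k)
    (by exact_mod_cast le_top)
  simpa using this

lemma DD_congr {n : ℕ} {g h : EuclideanSpace ℝ (Fin n) × ℝ → ℝ} (hg : ContDiff ℝ (⊤ : ℕ∞) g)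
    (hh : ContDiff ℝ (⊤ : ℕ∞) h) (x : EuclideanSpace ℝ (Fin n)) (t : ℝ) (i : Fin n)
    (H : ∀ y, g (y, t) = h (y, t)) : DD (ei i) g (x, t) = DD (ei i) h (x, t) := by
  unfold ei
  rw [← DD_slice hg, ← DD_slice hh]
  simp_rw [H]

/-- Polynomially bounded on the slab. -/
def PB {n : ℕ} (y : EuclideanSpace ℝ (Fin n)) (T : ℝ)
    (g : EuclideanSpace ℝ (Fin n) × ℝ → ℝ) : Prop :=
  ∃ K : ℝ, 0 ≤ K ∧ ∃ k : ℕ, ∀ x, ∀ t ∈ Set.Icc (0 : ℝ) T, |g (x, t)| ≤ K * (1 + ‖x - y‖) ^ k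

section
variable {n : ℕ} {y : EuclideanSpace ℝ (Fin n)} {T : ℝ} {g h : EuclideanSpace ℝ (Fin n) × ℝ → ℝ}

lemma PB.of_bdd (K : ℝ) (H : ∀ x, ∀ t ∈ Set.Icc (0 : ℝ) T, |g (x, t)| ≤ K) : PB y T g :=
  ⟨|K|, abs_nonneg _, 0, fun x t ht => by simpa using (H x t ht).trans (le_abs_self K)⟩

lemma PB.const (c : ℝ) : PB y T (fun _ => c) := PB.of_bdd |c| (fun _ _ _ => le_rfl)

lemma PB.add (hg : PB y T g) (hh : PB y T h) : PB y T (fun p => g p + h p) := by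
  obtain ⟨K, hK, k, H⟩ := hg
  obtain ⟨K', hK', k', H'⟩ := hh
  refine ⟨K + K', by positivity, k + k', fun x t ht => ?_⟩
  have h1 : (1 : ℝ) ≤ 1 + ‖x - y‖ := by linarith [norm_nonneg (x - y)]
  calc |g (x, t) + h (x, t)| ≤ |g (x, t)| + |h (x, t)| := abs_add_le _ _
    _ ≤ K * (1 + ‖x - y‖) ^ k + K' * (1 + ‖x - y‖) ^ k' := add_le_add (H x t ht) (H' x t ht)
    _ ≤ K * (1 + ‖x - y‖) ^ (k + k') + K' * (1 + ‖x - y‖) ^ (k + k') := by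
        gcongr <;> first | exact h1 | omega
    _ = _ := by ring

lemma PB.mul (hg : PB y T g) (hh : PB y T h) : PB y T (fun p => g p * h p) := by
  obtain ⟨K, hK, k, H⟩ := hg
  obtain ⟨K', hK', k', H'⟩ := hh
  refine ⟨K * K', by positivity, k + k', fun x t ht => ?_⟩
  calc |g (x, t) * h (x, t)| = |g (x, t)| * |h (x, t)| := abs_mul _ _
    _ ≤ (K * (1 + ‖x - y‖) ^ k) * (K' * (1 + ‖x - y‖) ^ k') :=
      mul_le_mul (H x t ht) (H' x t ht) (abs_nonneg _) (by positivity)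
    _ = _ := by ring

lemma PB.neg (hg : PB y T g) : PB y T (fun p => - g p) := by
  simpa using (PB.const (-1)).mul hg

lemma PB.sub (hg : PB y T g) (hh : PB y T h) : PB y T (fun p => g p - h p) := by
  simpa [sub_eq_add_neg] using hg.add hh.neg

lemma PB.pow (hg : PB y T g) (k : ℕ) : PB y T (fun p => g p ^ k) := by
  induction k with
  | zero => simpa using PB.const 1
  | succ k ih => simpa [pow_succ] using ih.mul hg

lemma PB.sum {ι : Type*} (s : Finset ι) {G : ι → EuclideanSpace ℝ (Fin n) × ℝ → ℝ}
    (H : ∀ i, PB y T (G i)) : PB y T (fun p => ∑ i ∈ s, G i p) := by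
  classical
  induction s using Finset.induction_on with
  | empty => simpa using PB.const 0
  | insert a s ha ih => simpa [Finset.sum_insert ha] using (H a).add ih

lemma PB.coord (i : Fin n) : PB y T (fun p => p.1 i - y i) := by
  refine ⟨1, zero_le_one, 1, fun x t _ => ?_⟩
  have := PiLp.norm_apply_le (x - y) i
  simp only [PiLp.sub_apply, norm_eq_abs] at this
  simp only [one_mul, pow_one]; linarith

end

lemma gauss_int {n : ℕ} (y : EuclideanSpace ℝ (Fin n)) {a : ℝ} (ha : 0 < a) :
    Integrable (fun x : EuclideanSpace ℝ (Fin n) => Real.exp (-a * ‖x - y‖ ^ 2)) := by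
  have h := (GaussianFourier.integrable_cexp_neg_mul_sq_norm_add
    (V := EuclideanSpace ℝ (Fin n)) (b := (a : ℂ)) (by simpa using ha) 0 0).norm
  have h2 : Integrable (fun x : EuclideanSpace ℝ (Fin n) => Real.exp (-a * ‖x‖ ^ 2)) := by
    refine h.congr (Filter.Eventually.of_forall fun x => ?_)
    simp only [Complex.norm_exp]
    congr 1
    simp [← Complex.ofReal_pow]
  exact h2.comp_sub_right y

/-- log of the backwards heat kernel -/
noncomputable def phi {n : ℕ} (y : EuclideanSpace ℝ (Fin n)) (s : ℝ)
    (x : EuclideanSpace ℝ (Fin n)) (t : ℝ) : ℝ :=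
  -(((n : ℝ) - 1) / 2 * Real.log (s - t)) - (∑ j, (x j - y j) ^ 2) / (4 * (s - t))

lemma sum_sq {n : ℕ} (x y : EuclideanSpace ℝ (Fin n)) :
    ∑ j, (x j - y j) ^ 2 = ‖x - y‖ ^ 2 := by
  rw [EuclideanSpace.real_norm_sq_eq]; simp

lemma poly_exp (k : ℕ) {a : ℝ} (ha : 0 < a) : ∃ M : ℝ, 0 ≤ M ∧ ∀ r : ℝ, 0 ≤ r →
    (1 + r) ^ k ≤ M * Real.exp (a * r ^ 2) := by
  refine ⟨k.factorial * Real.exp (1 + 1 / (4 * a)), by positivity, fun r hr => ?_⟩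
  have h1 := Real.pow_div_factorial_le_exp (1 + r) (by linarith) k
  rw [div_le_iff₀ (by positivity)] at h1
  refine h1.trans ?_
  rw [mul_comm (Real.exp (1 + r)), mul_assoc, ← Real.exp_add]
  refine mul_le_mul_of_nonneg_left (Real.exp_le_exp.2 ?_) (by positivity)
  have : 0 ≤ a * (r - 1 / (2 * a)) ^ 2 := by positivity
  have h3 : a * (r - 1 / (2 * a)) ^ 2 = a * r ^ 2 - r + 1 / (4 * a) := by field_simp; ring
  linarith

/-- gaussian domination -/
lemma PB.gauss {n : ℕ} {y : EuclideanSpace ℝ (Fin n)} {T s : ℝ} (hs : T < s) (hs0 : 0 < s)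
    {g : EuclideanSpace ℝ (Fin n) × ℝ → ℝ} (hg : PB y T g) :
    ∃ M : ℝ, ∀ x, ∀ t ∈ Set.Icc (0 : ℝ) T,
      |Real.exp (phi y s x t) * g (x, t)| ≤ M * Real.exp (-(1 / (8 * s)) * ‖x - y‖ ^ 2) := by
  obtain ⟨K, hK, k, H⟩ := hg
  obtain ⟨M, hM, HM⟩ := poly_exp k (a := 1 / (8 * s)) (by positivity)
  have hcont : ContinuousOn (fun t : ℝ => Real.exp (-(((n : ℝ) - 1) / 2 * Real.log (s - t))))
      (Set.Icc 0 T) := by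
    refine Real.continuous_exp.comp_continuousOn (ContinuousOn.neg (ContinuousOn.mul
      continuousOn_const (ContinuousOn.log (by fun_prop) ?_)))
    intro t ht; have := ht.2; intro h0; linarith
  obtain ⟨B, hB⟩ := isCompact_Icc.exists_bound_of_continuousOn hcont
  refine ⟨|B| * (K * M), fun x t ht => ?_⟩
  have hτ : 0 < s - t := by linarith [ht.2]
  have e1 : Real.exp (phi y s x t) ≤ |B| * Real.exp (-(1 / (4 * s)) * ‖x - y‖ ^ 2) := by
    unfold phi
    rw [sub_eq_add_neg, Real.exp_add, sum_sq]
    have hb := hB t ht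
    rw [Real.norm_eq_abs, abs_of_pos (Real.exp_pos _)] at hb
    gcongr
    · exact hb.trans (le_abs_self B)
    · rw [neg_mul, neg_le_neg_iff, div_mul_eq_mul_div, one_mul]
      exact div_le_div_of_nonneg_left (by positivity) (by positivity) (by linarith [ht.1])
  rw [abs_mul, abs_of_pos (Real.exp_pos _)]
  calc _ ≤ (|B| * Real.exp (-(1 / (4 * s)) * ‖x - y‖ ^ 2)) * (K * (M * Real.exp (1 / (8 * s) * ‖x - y‖ ^ 2))) := by
        refine mul_le_mul e1 ((H x t ht).trans ?_) (abs_nonneg _) (by positivity)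
        gcongr
        exact HM _ (norm_nonneg _)
    _ = |B| * (K * M) * (Real.exp (-(1 / (4 * s)) * ‖x - y‖ ^ 2) * Real.exp (1 / (8 * s) * ‖x - y‖ ^ 2)) := by ring
    _ = _ := by
        rw [← Real.exp_add]; congr 2; field_simp; ring

lemma phi_cont {n : ℕ} (y : EuclideanSpace ℝ (Fin n)) (s t : ℝ) :
    Continuous (fun x => phi y s x t) := by
  unfold phi
  fun_prop

lemma PB.integrable {n : ℕ} {y : EuclideanSpace ℝ (Fin n)} {T s : ℝ} (hs : T < s) (hs0 : 0 < s)
    {g : EuclideanSpace ℝ (Fin n) × ℝ → ℝ} (hg : PB y T g) {t : ℝ} (ht : t ∈ Set.Icc 0 T)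
    (hc : Continuous (fun x => g (x, t))) :
    Integrable (fun x => Real.exp (phi y s x t) * g (x, t)) := by
  obtain ⟨M, hM⟩ := hg.gauss hs hs0
  refine ((gauss_int y (a := 1 / (8 * s)) (by positivity)).const_mul M).mono' ?_ ?_
  · exact ((Real.continuous_exp.comp (phi_cont y s t)).mul hc).aestronglyMeasurable
  · exact Filter.Eventually.of_forall fun x => hM x t ht

lemma int_line_zero {n : ℕ} (f f' : EuclideanSpace ℝ (Fin n) → ℝ) (v : EuclideanSpace ℝ (Fin n))
    (hf : Integrable f) (hf' : Integrable f') (h : ∀ x, HasLineDerivAt ℝ f (f' x) x v) :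
    ∫ x, f' x = 0 := by
  have := integral_bilinear_hasLineDerivAt_right_eq_neg_left_of_integrable (μ := volume)
    (f := f) (f' := f') (g := fun _ => (1 : ℝ)) (g' := fun _ => 0) (v := v)
    (B := ContinuousLinearMap.mul ℝ ℝ) (by simpa using hf') (by simp) (by simpa using hf)
    (fun x _ => h x) (fun x _ => by simpa [HasLineDerivAt] using hasDerivAt_const (0 : ℝ) (1 : ℝ))
  simpa using this

end AC
namespace AC

lemma alg {n : ℕ} (c ε u ut : ℝ) (hc : 0 ≤ c) (hε : 0 < ε) (a b z : Fin n → ℝ)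
    (H : Fin n → Fin n → ℝ) (hH : ∀ i j, H i j = H j i)
    (hut : ut = ∑ i, H i i - (1 / ε ^ 2) * (2 * u * (u ^ 2 - 1))) (e : ℝ)
    (he : e = (ε / 2) * ∑ i, a i ^ 2 + (1 / ε) * ((1 / 2) * (1 - u ^ 2) ^ 2))
    (hd : (ε / 2) * ∑ i, a i ^ 2 ≤ (1 / ε) * ((1 / 2) * (1 - u ^ 2) ^ 2)) :
    (((n : ℝ) - 1) / 2 * c - (∑ j, z j ^ 2) / 4 * c ^ 2) * e
      + (ε * ∑ k, a k * b k + (1 / ε) * (2 * u * (u ^ 2 - 1)) * ut) ≤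
    ∑ i, ((-(z i / 2 * c)) * (ε * (ut * a i) - c / 2 * (ε * (a i * ∑ j, z j * a j) - z i * e))
      + (ε * (b i * a i + ut * H i i) - c / 2 * (ε * (H i i * (∑ j, z j * a j)
          + a i * (a i + ∑ j, z j * H i j)) - (e + z i * (ε * ∑ k, a k * H i k
            + (1 / ε) * (2 * u * (u ^ 2 - 1)) * a i))))) := by
  set A := ∑ j, z j * a j with hA
  set N := ∑ i, a i ^ 2 with hN
  set Z := ∑ j, z j ^ 2 with hZ
  set S := ∑ k, a k * b k with hS
  set Lp := ∑ i, H i i with hL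
  set Q := ∑ i, a i * ∑ j, z j * H i j with hQ
  have hQ' : ∑ i, z i * ∑ k, a k * H i k = Q := by
    rw [hQ]
    simp_rw [Finset.mul_sum]
    rw [Finset.sum_comm]
    refine Finset.sum_congr rfl fun i _ => Finset.sum_congr rfl fun j _ => ?_
    rw [hH j i]; ring
  have key : ∑ i, ((-(z i / 2 * c)) * (ε * (ut * a i) - c / 2 * (ε * (a i * A) - z i * e))
      + (ε * (b i * a i + ut * H i i) - c / 2 * (ε * (H i i * A
          + a i * (a i + ∑ j, z j * H i j)) - (e + z i * (ε * ∑ k, a k * H i k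
            + (1 / ε) * (2 * u * (u ^ 2 - 1)) * a i))))) =
      -(c / 2 * ε * ut) * A + c ^ 2 / 4 * ε * A * A - c ^ 2 / 4 * e * Z
      + ε * S + ε * ut * Lp - c / 2 * ε * A * Lp - c / 2 * ε * N - c / 2 * ε * Q + c / 2 * e * n
      + c / 2 * ε * Q + c / 2 * ((1 / ε) * (2 * u * (u ^ 2 - 1))) * A := by
    have e0 : ∀ i, ((-(z i / 2 * c)) * (ε * (ut * a i) - c / 2 * (ε * (a i * A) - z i * e))
      + (ε * (b i * a i + ut * H i i) - c / 2 * (ε * (H i i * A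
          + a i * (a i + ∑ j, z j * H i j)) - (e + z i * (ε * ∑ k, a k * H i k
            + (1 / ε) * (2 * u * (u ^ 2 - 1)) * a i))))) =
      (-(c / 2 * ε * ut) + c ^ 2 / 4 * ε * A + c / 2 * ((1 / ε) * (2 * u * (u ^ 2 - 1))))
          * (z i * a i)
        + (- (c ^ 2 / 4 * e)) * z i ^ 2 + ε * (a i * b i) + (ε * ut - c / 2 * ε * A) * H i i
        + (-(c / 2 * ε)) * a i ^ 2 + (-(c / 2 * ε)) * (a i * ∑ j, z j * H i j)
        + (c / 2 * ε) * (z i * ∑ k, a k * H i k) + c / 2 * e := by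
      intro i; ring
    rw [Finset.sum_congr rfl fun i _ => e0 i]
    simp only [Finset.sum_add_distrib, ← Finset.mul_sum, Finset.sum_const, Finset.card_univ,
      Fintype.card_fin, nsmul_eq_mul]
    rw [hQ', ← hA, ← hN, ← hZ, ← hS, ← hL, ← hQ]
    ring
  rw [key]
  have hLp : Lp = ut + (1 / ε ^ 2) * (2 * u * (u ^ 2 - 1)) := by rw [hut]; ring
  have h1 : ε * ((1 / ε ^ 2) * (2 * u * (u ^ 2 - 1))) = (1 / ε) * (2 * u * (u ^ 2 - 1)) := by
    field_simp
  have hεL : ε * Lp = ε * ut + (1 / ε) * (2 * u * (u ^ 2 - 1)) := by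
    rw [hLp, mul_add, h1]
  have hsq : 0 ≤ ε * (ut - c / 2 * A) ^ 2 := by positivity
  have hdd : c / 2 * (ε * N - e) ≤ 0 := by
    have : ε * N - e ≤ 0 := by rw [he]; linarith
    exact mul_nonpos_of_nonneg_of_nonpos (by positivity) this
  generalize (1 / ε) * (2 * u * (u ^ 2 - 1)) = f at *
  have h2 : ε * ut * Lp = ut * (ε * ut + f) := by rw [← hεL]; ring
  have h3 : c / 2 * ε * A * Lp = c / 2 * A * (ε * ut + f) := by rw [← hεL]; ring
  rw [h2, h3]
  nlinarith

/-- energy density -/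
noncomputable def en {n : ℕ} (ε : ℝ) (U : EuclideanSpace ℝ (Fin n) × ℝ → ℝ)
    (p : EuclideanSpace ℝ (Fin n) × ℝ) : ℝ :=
  (ε / 2) * ∑ i, (DD (ei i) U p) ^ 2 + (1 / ε) * ((1 / 2) * (1 - (U p) ^ 2) ^ 2)

/-- derivative of the energy density -/
noncomputable def enD {n : ℕ} (ε : ℝ) (U : EuclideanSpace ℝ (Fin n) × ℝ → ℝ)
    (v : EuclideanSpace ℝ (Fin n) × ℝ)
    (p : EuclideanSpace ℝ (Fin n) × ℝ) : ℝ :=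
  ε * ∑ k, DD (ei k) U p * DD v (DD (ei k) U) p
    + (1 / ε) * (2 * U p * ((U p) ^ 2 - 1)) * DD v U p

/-- inverse time to the singularity -/
noncomputable def cc {n : ℕ} (s : ℝ) (p : EuclideanSpace ℝ (Fin n) × ℝ) : ℝ := 1 / (s - p.2)

/-- divergence field -/
noncomputable def hh {n : ℕ} (ε : ℝ) (U : EuclideanSpace ℝ (Fin n) × ℝ → ℝ)
    (y : EuclideanSpace ℝ (Fin n)) (s : ℝ) (i : Fin n) (p : EuclideanSpace ℝ (Fin n) × ℝ) : ℝ :=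
  ε * (DD et U p * DD (ei i) U p) - cc s p / 2 *
    (ε * (DD (ei i) U p * ∑ j, (p.1 j - y j) * DD (ei j) U p) - (p.1 i - y i) * en ε U p)

/-- divergence field derivative -/
noncomputable def hhD {n : ℕ} (ε : ℝ) (U : EuclideanSpace ℝ (Fin n) × ℝ → ℝ)
    (y : EuclideanSpace ℝ (Fin n)) (s : ℝ) (i : Fin n) (p : EuclideanSpace ℝ (Fin n) × ℝ) : ℝ :=
  ε * (DD et (DD (ei i) U) p * DD (ei i) U p + DD et U p * DD (ei i) (DD (ei i) U) p)
    - cc s p / 2 *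
    (ε * (DD (ei i) (DD (ei i) U) p * (∑ j, (p.1 j - y j) * DD (ei j) U p)
        + DD (ei i) U p * (DD (ei i) U p + ∑ j, (p.1 j - y j) * DD (ei i) (DD (ei j) U) p))
      - (en ε U p + (p.1 i - y i) * enD ε U (ei i) p))

lemma en_calc {n : ℕ} (ε : ℝ) {U : EuclideanSpace ℝ (Fin n) × ℝ → ℝ}
    {v : EuclideanSpace ℝ (Fin n) × ℝ} {p : EuclideanSpace ℝ (Fin n) × ℝ}
    {γ : ℝ → EuclideanSpace ℝ (Fin n) × ℝ} {t : ℝ} (hp : γ t = p)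
    (h0 : HasDerivAt (fun r => U (γ r)) (DD v U p) t)
    (h1 : ∀ i, HasDerivAt (fun r => DD (ei i) U (γ r)) (DD v (DD (ei i) U) p) t) :
    HasDerivAt (fun r => en ε U (γ r)) (enD ε U v p) t := by
  unfold en enD
  have e1 := (HasDerivAt.fun_sum (u := Finset.univ) fun i _ => (h1 i).pow 2).const_mul (ε / 2)
  have e2 := ((((h0.pow 2).const_sub 1).pow 2).const_mul (1 / 2 : ℝ)).const_mul (1 / ε)
  refine (e1.add e2).congr_deriv ?_
  simp only [hp, Finset.mul_sum]
  congr 1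
  · refine Finset.sum_congr rfl fun i _ => ?_
    push_cast; simp; ring
  · simp [hp]; ring

lemma hh_line {n : ℕ} (ε : ℝ) {U : EuclideanSpace ℝ (Fin n) × ℝ → ℝ}
    (hU : ContDiff ℝ (⊤ : ℕ∞) U) (y : EuclideanSpace ℝ (Fin n)) (s : ℝ) (i : Fin n)
    (x : EuclideanSpace ℝ (Fin n)) (t : ℝ) :
    HasLineDerivAt ℝ (fun x => Real.exp (phi y s x t) * hh ε U y s i (x, t))
      (Real.exp (phi y s x t) * (-((x i - y i) / 2 * cc s (x, t)) * hh ε U y s i (x, t)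
        + hhD ε U y s i (x, t))) x (EuclideanSpace.single i 1) := by
  unfold HasLineDerivAt
  have hz : ∀ j, HasDerivAt
      (fun r : ℝ => (x + r • (EuclideanSpace.single i (1 : ℝ) : EuclideanSpace ℝ (Fin n))) j - y j)
      (if j = i then 1 else 0) 0 := by
    intro j
    have : (fun r : ℝ => (x + r • (EuclideanSpace.single i (1 : ℝ) : EuclideanSpace ℝ (Fin n))) j
        - y j) = fun r : ℝ => x j + r * (if j = i then 1 else 0) - y j := by
      funext r; simp
    rw [this]
    simpa using (((hasDerivAt_id (0 : ℝ)).mul_const (if j = i then (1 : ℝ) else 0)).const_add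
      (x j)).sub_const (y j)
  have hl : ∀ {g : EuclideanSpace ℝ (Fin n) × ℝ → ℝ}, ContDiff ℝ (⊤ : ℕ∞) g →
      HasDerivAt (fun r : ℝ => g (x + r • EuclideanSpace.single i (1 : ℝ), t))
        (DD (ei i) g (x, t)) 0 := fun hg => DD_space hg _ _ _
  have hphi : HasDerivAt (fun r : ℝ => phi y s (x + r • EuclideanSpace.single i (1 : ℝ)) t)
      (-((x i - y i) / 2 * cc s (x, t))) 0 := by
    unfold phi
    have e1 := ((HasDerivAt.fun_sum (u := Finset.univ) fun j _ => (hz j).pow 2).div_const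
      (4 * (s - t))).const_sub (-(((n : ℝ) - 1) / 2 * Real.log (s - t)))
    refine e1.congr_deriv ?_
    simp [cc]
    simp only [div_eq_mul_inv, mul_inv]
    ring
  have hen : HasDerivAt (fun r : ℝ => en ε U (x + r • EuclideanSpace.single i (1 : ℝ), t))
      (enD ε U (ei i) (x, t)) 0 :=
    en_calc ε (γ := fun r : ℝ => (x + r • EuclideanSpace.single i (1 : ℝ), t)) (by simp)
      (hl hU) (fun j => hl (DD_contDiff _ hU))
  have hA := HasDerivAt.fun_sum (u := Finset.univ) fun j _ =>
    (hz j).mul (hl (DD_contDiff (ei j) hU))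
  have hi := hl (DD_contDiff (ei i) hU)
  have ht := hl (DD_contDiff et hU)
  have hhh : HasDerivAt (fun r : ℝ => hh ε U y s i (x + r • EuclideanSpace.single i (1 : ℝ), t))
      (hhD ε U y s i (x, t)) 0 := by
    have e1 := ((ht.mul hi).const_mul ε).sub
      ((((hi.mul hA).const_mul ε).sub ((hz i).mul hen)).const_mul (cc s (x, t) / 2))
    refine e1.congr_deriv ?_
    unfold hhD
    rw [DD_comm et (ei i) hU]
    simp [Finset.sum_add_distrib]
  have := hphi.exp.mul hhh
  refine this.congr_deriv ?_
  simp; ring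

lemma time_deriv {n : ℕ} (ε : ℝ) {U : EuclideanSpace ℝ (Fin n) × ℝ → ℝ}
    (hU : ContDiff ℝ (⊤ : ℕ∞) U) (y : EuclideanSpace ℝ (Fin n)) (s : ℝ)
    (x : EuclideanSpace ℝ (Fin n)) (t : ℝ) (ht : t < s) :
    HasDerivAt (fun r => Real.exp (phi y s x r) * en ε U (x, r))
      (Real.exp (phi y s x t) * ((((n : ℝ) - 1) / 2 * cc s (x, t)
        - (∑ j, (x j - y j) ^ 2) / 4 * cc s (x, t) ^ 2) * en ε U (x, t)
          + enD ε U et (x, t))) t := by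
  have hτ : s - t ≠ 0 := by intro h; linarith
  have hen : HasDerivAt (fun r : ℝ => en ε U (x, r)) (enD ε U et (x, t)) t :=
    en_calc ε (γ := fun r : ℝ => (x, r)) rfl (DD_time hU _ _)
      (fun j => DD_time (DD_contDiff _ hU) _ _)
  have hst : HasDerivAt (fun r : ℝ => s - r) (-1) t := by
    simpa using (hasDerivAt_id t).const_sub s
  have hphi : HasDerivAt (fun r => phi y s x r) (((n : ℝ) - 1) / 2 * cc s (x, t)
        - (∑ j, (x j - y j) ^ 2) / 4 * cc s (x, t) ^ 2) t := by
    unfold phi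
    have e1 := ((hst.log hτ).const_mul (((n : ℝ) - 1) / 2)).neg.sub
      ((hst.const_mul 4).fun_inv (by simpa using hτ) |>.const_mul (∑ j, (x j - y j) ^ 2))
    simp only [div_eq_mul_inv] at e1 ⊢
    refine e1.congr_deriv ?_
    simp only [cc]
    field_simp
  refine (hphi.exp.mul hen).congr_deriv ?_
  ring

end AC
namespace AC

/-- integrand of the time derivative (without the weight) -/
noncomputable def td {n : ℕ} (ε : ℝ) (U : EuclideanSpace ℝ (Fin n) × ℝ → ℝ)
    (y : EuclideanSpace ℝ (Fin n)) (s : ℝ) (p : EuclideanSpace ℝ (Fin n) × ℝ) : ℝ :=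
  (((n : ℝ) - 1) / 2 * cc s p - (∑ j, (p.1 j - y j) ^ 2) / 4 * cc s p ^ 2) * en ε U p
          + enD ε U et p

/-- integrand of the divergence (without the weight) -/
noncomputable def dv {n : ℕ} (ε : ℝ) (U : EuclideanSpace ℝ (Fin n) × ℝ → ℝ)
    (y : EuclideanSpace ℝ (Fin n)) (s : ℝ) (i : Fin n) (p : EuclideanSpace ℝ (Fin n) × ℝ) : ℝ :=
  -((p.1 i - y i) / 2 * cc s p) * hh ε U y s i p + hhD ε U y s i p

lemma PB.cc {n : ℕ} {y : EuclideanSpace ℝ (Fin n)} {T s : ℝ} (hs : T < s) :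
    PB y T (cc s) := by
  refine PB.of_bdd (1 / (s - T)) fun x t ht => ?_
  have h1 : 0 < s - t := by linarith [ht.2]
  simp only [AC.cc]
  rw [abs_of_pos (by positivity)]
  exact one_div_le_one_div_of_le (by linarith) (by linarith [ht.2])

lemma DD_cont {n : ℕ} (v : EuclideanSpace ℝ (Fin n) × ℝ)
    {g : EuclideanSpace ℝ (Fin n) × ℝ → ℝ} (hg : ContDiff ℝ (⊤ : ℕ∞) g) :
    Continuous (DD v g) := (DD_contDiff v hg).continuous

lemma en_cont {n : ℕ} (ε : ℝ) {U : EuclideanSpace ℝ (Fin n) × ℝ → ℝ}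
    (hU : ContDiff ℝ (⊤ : ℕ∞) U) : Continuous (en ε U) := by
  have h0 := hU.continuous
  have h1 := fun v => DD_cont v hU
  unfold en
  fun_prop

lemma enD_cont {n : ℕ} (ε : ℝ) {U : EuclideanSpace ℝ (Fin n) × ℝ → ℝ}
    (hU : ContDiff ℝ (⊤ : ℕ∞) U) (v : EuclideanSpace ℝ (Fin n) × ℝ) : Continuous (enD ε U v) := by
  have h0 := hU.continuous
  have h1 := fun v => DD_cont v hU
  have h2 := fun v w => DD_cont v (DD_contDiff w hU)
  unfold enD
  fun_prop

section
variable {n : ℕ} {ε : ℝ} {U : EuclideanSpace ℝ (Fin n) × ℝ → ℝ} {y : EuclideanSpace ℝ (Fin n)}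
  {T s : ℝ}

lemma en_PB (h0 : PB y T U) (h1 : ∀ i, PB y T (DD (ei i) U)) : PB y T (en ε U) :=
  ((PB.const _).mul (PB.sum _ fun i => (h1 i).pow 2)).add
    ((PB.const _).mul ((PB.const _).mul (((PB.const 1).sub (h0.pow 2)).pow 2)))

lemma enD_PB (v : EuclideanSpace ℝ (Fin n) × ℝ) (h0 : PB y T U) (h1 : ∀ i, PB y T (DD (ei i) U))
    (h2 : PB y T (DD v U)) (h3 : ∀ i, PB y T (DD v (DD (ei i) U))) : PB y T (enD ε U v) :=
  ((PB.const _).mul (PB.sum _ fun i => (h1 i).mul (h3 i))).add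
    (((PB.const _).mul (((PB.const 2).mul h0).mul ((h0.pow 2).sub (PB.const 1)))).mul h2)

lemma div_PB {g : EuclideanSpace ℝ (Fin n) × ℝ → ℝ} (hg : PB y T g) (c : ℝ) :
    PB y T (fun p => g p / c) := by
  simpa [div_eq_mul_inv] using hg.mul (PB.const c⁻¹)

lemma td_PB (hs : T < s) (h0 : PB y T U) (h1 : ∀ i, PB y T (DD (ei i) U))
    (ht : PB y T (DD et U)) (htx : ∀ i, PB y T (DD et (DD (ei i) U))) : PB y T (td ε U y s) :=
  ((((PB.const _).mul (PB.cc hs)).sub ((div_PB (PB.sum _ fun j => (PB.coord j).pow 2) 4).mul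
    ((PB.cc hs).pow 2))).mul (en_PB h0 h1)).add (enD_PB et h0 h1 ht htx)

lemma hh_PB (hs : T < s) (h0 : PB y T U) (h1 : ∀ i, PB y T (DD (ei i) U))
    (ht : PB y T (DD et U)) (i : Fin n) : PB y T (hh ε U y s i) :=
  ((PB.const _).mul (ht.mul (h1 i))).sub ((div_PB (PB.cc hs) 2).mul
    (((PB.const _).mul ((h1 i).mul (PB.sum _ fun j => (PB.coord j).mul (h1 j)))).sub
      ((PB.coord i).mul (en_PB h0 h1))))

lemma hhD_PB (hs : T < s) (h0 : PB y T U) (h1 : ∀ i, PB y T (DD (ei i) U))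
    (h2 : ∀ i j, PB y T (DD (ei i) (DD (ei j) U)))
    (ht : PB y T (DD et U)) (htx : ∀ i, PB y T (DD et (DD (ei i) U))) (i : Fin n) :
    PB y T (hhD ε U y s i) :=
  ((PB.const _).mul (((htx i).mul (h1 i)).add (ht.mul (h2 i i)))).sub ((div_PB (PB.cc hs) 2).mul
    (((PB.const _).mul (((h2 i i).mul (PB.sum _ fun j => (PB.coord j).mul (h1 j))).add
      ((h1 i).mul ((h1 i).add (PB.sum _ fun j => (PB.coord j).mul (h2 i j)))))).sub
      ((en_PB h0 h1).add ((PB.coord i).mul (enD_PB (ei i) h0 h1 (h1 i) (fun j => h2 i j))))))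

lemma dv_PB (hs : T < s) (h0 : PB y T U) (h1 : ∀ i, PB y T (DD (ei i) U))
    (h2 : ∀ i j, PB y T (DD (ei i) (DD (ei j) U)))
    (ht : PB y T (DD et U)) (htx : ∀ i, PB y T (DD et (DD (ei i) U))) (i : Fin n) :
    PB y T (dv ε U y s i) :=
  ((((div_PB (PB.coord i) 2).mul (PB.cc hs)).neg).mul (hh_PB hs h0 h1 ht i)).add
    (hhD_PB hs h0 h1 h2 ht htx i)

lemma td_cont (hU : ContDiff ℝ (⊤ : ℕ∞) U) (t : ℝ) : Continuous (fun x => td ε U y s (x, t)) := by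
  have h1 := en_cont ε hU
  have h2 := enD_cont ε hU et
  unfold td cc
  dsimp only
  generalize 1 / (s - t) = c
  fun_prop

lemma hh_cont (hU : ContDiff ℝ (⊤ : ℕ∞) U) (i : Fin n) (t : ℝ) :
    Continuous (fun x => hh ε U y s i (x, t)) := by
  have h0 := en_cont ε hU
  have h1 := fun v => DD_cont v hU
  unfold hh cc
  dsimp only
  generalize 1 / (s - t) = c
  fun_prop

lemma dv_cont (hU : ContDiff ℝ (⊤ : ℕ∞) U) (i : Fin n) (t : ℝ) :
    Continuous (fun x => dv ε U y s i (x, t)) := by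
  have h := en_cont ε hU
  have h0 := hh_cont (ε := ε) (y := y) (s := s) hU i t
  have h1 := fun v => DD_cont v hU
  have h2 := fun v w => DD_cont v (DD_contDiff w hU)
  have h3 := fun v => enD_cont ε hU v
  unfold dv hhD cc
  dsimp only
  generalize 1 / (s - t) = c
  fun_prop

theorem mono (hε : 0 < ε) (hU : ContDiff ℝ (⊤ : ℕ∞) U) (hT : 0 ≤ T) (hs : T < s)
    (pde : ∀ x t, 0 ≤ t → DD et U (x, t) = ∑ i, DD (ei i) (DD (ei i) U) (x, t)
      - (1 / ε ^ 2) * (2 * U (x, t) * (U (x, t) ^ 2 - 1)))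
    (disc : ∀ x t, 0 ≤ t → (ε / 2) * ∑ i, DD (ei i) U (x, t) ^ 2
      ≤ (1 / ε) * ((1 / 2) * (1 - U (x, t) ^ 2) ^ 2))
    (h0 : PB y T U) (h1 : ∀ i, PB y T (DD (ei i) U))
    (h2 : ∀ i j, PB y T (DD (ei i) (DD (ei j) U)))
    (ht : PB y T (DD et U)) (htx : ∀ i, PB y T (DD et (DD (ei i) U))) :
    ∫ x, Real.exp (phi y s x T) * en ε U (x, T) ≤ ∫ x, Real.exp (phi y s x 0) * en ε U (x, 0) := by
  have hs0 : 0 < s := by linarith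
  have hen := en_PB (ε := ε) h0 h1
  have htd := td_PB (ε := ε) hs h0 h1 ht htx
  have encont : ∀ t, Continuous (fun x => en ε U (x, t)) := fun t => by
    have := en_cont ε hU
    fun_prop
  obtain ⟨M, hM⟩ := hen.gauss hs hs0
  obtain ⟨M', hM'⟩ := htd.gauss hs hs0
  have gi := gauss_int y (a := 1 / (8 * s)) (by positivity)
  have meas : ∀ t, AEStronglyMeasurable (fun x => Real.exp (phi y s x t) * en ε U (x, t)) volume :=
    fun t => ((Real.continuous_exp.comp (phi_cont y s t)).mul (encont t)).aestronglyMeasurable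
  have hder : ∀ t ∈ Set.Ioo 0 T, HasDerivAt
      (fun t => ∫ x, Real.exp (phi y s x t) * en ε U (x, t))
      (∫ x, Real.exp (phi y s x t) * td ε U y s (x, t)) t := by
    intro t ht0
    refine (hasDerivAt_integral_of_dominated_loc_of_deriv_le (μ := volume)
      (s := Set.Ioo 0 T) (F := fun t x => Real.exp (phi y s x t) * en ε U (x, t))
      (F' := fun t x => Real.exp (phi y s x t) * td ε U y s (x, t))
      (bound := fun x => M' * Real.exp (-(1 / (8 * s)) * ‖x - y‖ ^ 2))
      (isOpen_Ioo.mem_nhds ht0) (Filter.Eventually.of_forall meas)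
      (hen.integrable hs hs0 (Set.Ioo_subset_Icc_self ht0) (encont t))
      (((Real.continuous_exp.comp (phi_cont y s t)).mul (td_cont hU t)).aestronglyMeasurable)
      (Filter.Eventually.of_forall fun x r hr => hM' x r (Set.Ioo_subset_Icc_self hr))
      (gi.const_mul M')
      (Filter.Eventually.of_forall fun x r hr => ?_)).2
    exact time_deriv ε hU y s x r (by linarith [hr.2])
  have hnonpos : ∀ t ∈ Set.Ioo 0 T, ∫ x, Real.exp (phi y s x t) * td ε U y s (x, t) ≤ 0 := by
    intro t ht0
    have htI := Set.Ioo_subset_Icc_self ht0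
    have hi : ∀ i, Integrable (fun x => Real.exp (phi y s x t) * dv ε U y s i (x, t)) :=
      fun i => (dv_PB hs h0 h1 h2 ht htx i).integrable hs hs0 htI (dv_cont hU i t)
    have hz : ∀ i, ∫ x, Real.exp (phi y s x t) * dv ε U y s i (x, t) = 0 := fun i =>
      int_line_zero _ _ (EuclideanSpace.single i 1)
        ((hh_PB (ε := ε) hs h0 h1 ht i).integrable hs hs0 htI (hh_cont hU i t)) (hi i)
        (fun x => hh_line ε hU y s i x t)
    calc _ ≤ ∫ x, ∑ i, Real.exp (phi y s x t) * dv ε U y s i (x, t) := by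
          refine integral_mono (htd.integrable hs hs0 htI (td_cont hU t))
            (integrable_finsetSum _ fun i _ => hi i) fun x => ?_
          simp only [← Finset.mul_sum]
          refine mul_le_mul_of_nonneg_left ?_ (Real.exp_pos _).le
          have hτ : 0 < s - t := by linarith [ht0.2]
          exact alg (cc s (x, t)) ε (U (x, t)) (DD et U (x, t)) (by simp [cc]; exact ht0.2.le.trans hs.le)
            hε (fun i => DD (ei i) U (x, t)) (fun i => DD et (DD (ei i) U) (x, t))
            (fun i => x i - y i) (fun i j => DD (ei i) (DD (ei j) U) (x, t))
            (fun i j => DD_comm _ _ hU _) (pde x t ht0.1.le) (en ε U (x, t)) rfl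
            (disc x t ht0.1.le)
      _ = ∑ i, ∫ x, Real.exp (phi y s x t) * dv ε U y s i (x, t) :=
          integral_finsetSum _ fun i _ => hi i
      _ ≤ 0 := by simp [hz]
  have hanti : AntitoneOn (fun t => ∫ x, Real.exp (phi y s x t) * en ε U (x, t)) (Set.Icc 0 T) := by
    refine antitoneOn_of_deriv_nonpos (convex_Icc 0 T) ?_ ?_ ?_
    · refine continuousOn_of_dominated (bound := fun x => M * Real.exp (-(1 / (8 * s)) * ‖x - y‖ ^ 2))
        (fun t _ => meas t) (fun t ht0 => Filter.Eventually.of_forall fun x => hM x t ht0)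
        (gi.const_mul M) (Filter.Eventually.of_forall fun x t ht0 => ?_)
      exact (time_deriv ε hU y s x t (by linarith [ht0.2])).continuousAt.continuousWithinAt
    · rw [interior_Icc]
      exact fun t ht0 => (hder t ht0).differentiableAt.differentiableWithinAt
    · rw [interior_Icc]
      intro t ht0
      rw [(hder t ht0).deriv]
      exact hnonpos t ht0
  exact hanti (Set.left_mem_Icc.2 hT) (Set.right_mem_Icc.2 hT) hT

end

end AC
namespace AC

lemma ball_le {n : ℕ} (μ : Measure (EuclideanSpace ℝ (Fin n))) (x : EuclideanSpace ℝ (Fin n))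
    {R : ℝ} (hR : 0 < R) :
    μ (Metric.ball x R) ≤ areaRatio n μ * ENNReal.ofReal (R ^ ((n : ℝ) - 1)) := by
  have hpos : 0 < R ^ ((n : ℝ) - 1) := Real.rpow_pos_of_pos hR _
  rw [← ENNReal.div_le_iff (by simpa using hpos) ENNReal.ofReal_ne_top]
  unfold areaRatio
  exact le_iSup_of_le x (le_iSup_of_le R (le_iSup_of_le hR le_rfl))

/-- the dimensional constant -/
noncomputable def C1 (n : ℕ) : ℝ≥0∞ :=
  ∑' k : ℕ, ENNReal.ofReal (Real.exp (1 - k) * ((k : ℝ) + 1) ^ n)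

lemma C1_ne_top (n : ℕ) : C1 n ≠ ⊤ := by
  unfold C1
  have h := Real.summable_pow_mul_exp_neg_nat_mul n (r := 1) one_pos
  have h2 := ((summable_nat_add_iff 1).2 h).mul_left (Real.exp 2)
  have h3 : Summable (fun k : ℕ => Real.exp (1 - k) * ((k : ℝ) + 1) ^ n) := by
    refine h2.congr fun k => ?_
    have : Real.exp (1 - k) = Real.exp 2 * Real.exp (-1 * ((k + 1 : ℕ) : ℝ)) := by
      rw [← Real.exp_add]; congr 1; push_cast; ring
    rw [this]; push_cast; ring
  rw [← ENNReal.ofReal_tsum_of_nonneg (fun k => by positivity) h3]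
  exact ENNReal.ofReal_ne_top

lemma growth0 {n : ℕ} (hn : 1 ≤ n) (μ : Measure (EuclideanSpace ℝ (Fin n)))
    (y : EuclideanSpace ℝ (Fin n)) {s : ℝ} (hs : 0 < s) :
    ∫⁻ x, ENNReal.ofReal (Real.exp (phi y s x 0)) ∂μ ≤ C1 n * areaRatio n μ := by
  set σ := Real.sqrt s with hσ
  have hσ0 : 0 < σ := Real.sqrt_pos.2 hs
  have hσs : σ ^ 2 = s := Real.sq_sqrt hs.le
  have hw : Real.exp (-(((n : ℝ) - 1) / 2 * Real.log s)) = (σ ^ ((n : ℝ) - 1))⁻¹ := by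
    rw [Real.rpow_def_of_pos hσ0, ← Real.exp_neg, hσ, Real.log_sqrt hs.le]
    congr 1; ring
  have hpt : ∀ x, ENNReal.ofReal (Real.exp (phi y s x 0)) ≤
      ∑' k : ℕ, ENNReal.ofReal ((σ ^ ((n : ℝ) - 1))⁻¹ * Real.exp (1 - k)) *
        (Metric.ball y ((k + 1) * σ)).indicator 1 x := by
    intro x
    set k := ⌊‖x - y‖ / σ⌋₊ with hk
    refine le_trans ?_ (ENNReal.le_tsum k)
    have h1 : (k : ℝ) ≤ ‖x - y‖ / σ := Nat.floor_le (by positivity)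
    have h2 : ‖x - y‖ / σ < k + 1 := Nat.lt_floor_add_one _
    have hx : x ∈ Metric.ball y ((k + 1) * σ) := by
      rw [mem_ball_iff_norm]
      exact (div_lt_iff₀ hσ0).1 h2
    rw [Set.indicator_of_mem hx, Pi.one_apply, mul_one]
    refine ENNReal.ofReal_le_ofReal ?_
    unfold phi
    rw [sub_eq_add_neg, Real.exp_add, sum_sq, sub_zero, hw]
    refine mul_le_mul_of_nonneg_left (Real.exp_le_exp.2 ?_) (by positivity)
    have h3 : ‖x - y‖ ^ 2 / (4 * s) = (‖x - y‖ / σ) ^ 2 / 4 := by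
      rw [div_pow, hσs]; field_simp
    rw [h3]
    have hk0 : (0 : ℝ) ≤ k := Nat.cast_nonneg _
    nlinarith [sq_nonneg (‖x - y‖ / σ - 2)]
  calc _ ≤ ∫⁻ x, ∑' k : ℕ, ENNReal.ofReal ((σ ^ ((n : ℝ) - 1))⁻¹ * Real.exp (1 - k)) *
        (Metric.ball y ((k + 1) * σ)).indicator 1 x ∂μ := lintegral_mono hpt
    _ = ∑' k : ℕ, ENNReal.ofReal ((σ ^ ((n : ℝ) - 1))⁻¹ * Real.exp (1 - k)) *
        μ (Metric.ball y ((k + 1) * σ)) := by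
        rw [lintegral_tsum]
        · congr 1; funext k
          rw [lintegral_const_mul _ (measurable_one.indicator measurableSet_ball),
            lintegral_indicator_one measurableSet_ball]
        · intro k
          exact ((measurable_one.indicator measurableSet_ball).const_mul _).aemeasurable
    _ ≤ ∑' k : ℕ, ENNReal.ofReal (Real.exp (1 - k) * ((k : ℝ) + 1) ^ n) * areaRatio n μ := by
        refine ENNReal.tsum_le_tsum fun k => ?_
        have hk : (0 : ℝ) < k + 1 := by positivity
        calc _ ≤ ENNReal.ofReal ((σ ^ ((n : ℝ) - 1))⁻¹ * Real.exp (1 - k)) *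
              (areaRatio n μ * ENNReal.ofReal (((k + 1) * σ) ^ ((n : ℝ) - 1))) := by
              gcongr
              exact ball_le μ y (by positivity)
          _ = ENNReal.ofReal ((σ ^ ((n : ℝ) - 1))⁻¹ * Real.exp (1 - k) *
              ((k + 1) * σ) ^ ((n : ℝ) - 1)) * areaRatio n μ := by
              rw [ENNReal.ofReal_mul (p := (σ ^ ((n : ℝ) - 1))⁻¹ * Real.exp (1 - k))
                (by positivity)]
              ring
          _ ≤ _ := by
              refine mul_le_mul' (ENNReal.ofReal_le_ofReal ?_) le_rfl
              rw [Real.mul_rpow hk.le hσ0.le]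
              have hp : 0 < σ ^ ((n : ℝ) - 1) := Real.rpow_pos_of_pos hσ0 _
              have : ((k : ℝ) + 1) ^ ((n : ℝ) - 1) ≤ ((k : ℝ) + 1) ^ n := by
                rw [← Real.rpow_natCast]
                exact Real.rpow_le_rpow_of_exponent_le (by linarith [(Nat.cast_nonneg k : (0:ℝ) ≤ k)]) (by linarith)
              calc _ = Real.exp (1 - k) * ((k : ℝ) + 1) ^ ((n : ℝ) - 1) := by
                    field_simp
                _ ≤ _ := by gcongr
    _ = _ := by rw [ENNReal.tsum_mul_right]; rfl

lemma weight_ball {n : ℕ} (y x : EuclideanSpace ℝ (Fin n)) (t : ℝ) {R : ℝ} (hR : 0 < R)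
    (hx : x ∈ Metric.ball y R) :
    1 ≤ Real.exp (1 / 4) * R ^ ((n : ℝ) - 1) * Real.exp (phi y (t + R ^ 2) x t) := by
  unfold phi
  rw [mem_ball_iff_norm] at hx
  rw [Real.rpow_def_of_pos hR, ← Real.exp_add, ← Real.exp_add, sum_sq, add_sub_cancel_left,
    Real.log_pow]
  apply Real.one_le_exp
  have h1 : ‖x - y‖ ^ 2 / (4 * R ^ 2) ≤ 1 / 4 := by
    rw [div_le_div_iff₀ (by positivity) (by norm_num)]
    have : ‖x - y‖ ^ 2 ≤ R ^ 2 := by gcongr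
    linarith
  push_cast
  linarith

lemma grad_sq {n : ℕ} {U : EuclideanSpace ℝ (Fin n) × ℝ → ℝ}
    (hU : ContDiff ℝ (⊤ : ℕ∞) U) (x : EuclideanSpace ℝ (Fin n)) (t : ℝ) :
    ‖gradient (fun y => U (y, t)) x‖ ^ 2 = ∑ i, DD (ei i) U (x, t) ^ 2 := by
  rw [EuclideanSpace.real_norm_sq_eq]
  refine Finset.sum_congr rfl fun i _ => ?_
  have h : DD (ei i) U (x, t) = fderiv ℝ (fun y => U (y, t)) x (EuclideanSpace.single i 1) :=
    (DD_slice hU _ _ _).symm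
  rw [h, ← toDual_gradient, InnerProductSpace.toDual_apply_apply,
    EuclideanSpace.inner_single_right]
  simp

end AC
/-- Uniform area growth bound under the Allen–Cahn flow on `ℝⁿ`: there is a constant
`C > 0` depending only on `n` such that if the discrepancy stays nonpositive and
`sup_{x,R>0} μ⁰(B_R(x))/R^{n-1} < ∞`, then for all `t ≥ 0`,
`sup_{x,R>0} μᵗ(B_R(x))/R^{n-1} ≤ C · sup_{x,R>0} μ⁰(B_R(x))/R^{n-1}`. -/
theorem allen_cahn_uniform_area_growth (n : ℕ) (hn : 1 ≤ n) :
    ∃ C : ℝ≥0∞, 0 < C ∧ C ≠ ⊤ ∧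
      ∀ (ε : ℝ), 0 < ε →
      ∀ (u : EuclideanSpace ℝ (Fin n) → ℝ → ℝ),
        ContDiff ℝ (⊤ : ℕ∞) (fun p : EuclideanSpace ℝ (Fin n) × ℝ => u p.1 p.2) →
        (∀ x t, |u x t| ≤ 1) →
        (∀ x, ∀ t, 0 ≤ t →
          deriv (u x) t = spaceLaplacian n (fun y => u y t) x
            - (1 / ε ^ 2) * (2 * u x t * ((u x t) ^ 2 - 1))) →
        (∀ T > (0 : ℝ), ∃ C' : ℝ, ∀ x, ∀ t ∈ Set.Icc (0 : ℝ) T,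
          (∀ i ≤ 3, ‖iteratedFDeriv ℝ i (fun y => u y t) x‖ ≤ C') ∧
            |deriv (u x) t| ≤ C') →
        ∀ (μ : ℝ → Measure (EuclideanSpace ℝ (Fin n))),
          (∀ t, μ t = volume.withDensity (fun x =>
            ENNReal.ofReal ((ε / 2) * ‖gradient (fun y => u y t) x‖ ^ 2
              + (1 / ε) * ((1 / 2) * (1 - (u x t) ^ 2) ^ 2)))) →
          (∀ x, ∀ t, 0 ≤ t →
            (ε / 2) * ‖gradient (fun y => u y t) x‖ ^ 2
              ≤ (1 / ε) * ((1 / 2) * (1 - (u x t) ^ 2) ^ 2)) →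
          areaRatio n (μ 0) ≠ ⊤ →
          ∀ t : ℝ, 0 ≤ t → areaRatio n (μ t) ≤ C * areaRatio n (μ 0) := by
  refine ⟨ENNReal.ofReal (Real.exp (1 / 4)) * (AC.C1 n + 1), ?_, ?_, ?_⟩
  · exact ENNReal.mul_pos (by simp [Real.exp_pos]) (by simp)
  · exact ENNReal.mul_ne_top ENNReal.ofReal_ne_top (by simp [AC.C1_ne_top])
  intro ε hε u hu hu1 hpde hbd μ hμ hdisc _ t ht
  set U : EuclideanSpace ℝ (Fin n) × ℝ → ℝ := fun p => u p.1 p.2 with hUdef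
  have hμ' : ∀ t, μ t = volume.withDensity (fun x => ENNReal.ofReal (AC.en ε U (x, t))) := by
    intro t
    rw [hμ t]
    congr 1; funext x
    have := AC.grad_sq hu x t
    simp only [AC.en]
    rw [← this]
  have hslice : ∀ t, (fun y => U (y, t)) = fun y => u y t := fun t => rfl
  have pde : ∀ x t, 0 ≤ t → AC.DD AC.et U (x, t) = ∑ i, AC.DD (AC.ei i) (AC.DD (AC.ei i) U) (x, t)
      - (1 / ε ^ 2) * (2 * U (x, t) * (U (x, t) ^ 2 - 1)) := by
    intro x t ht
    have h1 : deriv (u x) t = AC.DD AC.et U (x, t) := (AC.DD_time hu x t).deriv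
    rw [← h1, hpde x t ht]
    congr 1
    unfold spaceLaplacian
    refine Finset.sum_congr rfl fun i _ => ?_
    have h2 : (fun y => fderiv ℝ (fun y => u y t) y (EuclideanSpace.single i (1 : ℝ))) =
        fun y => AC.DD (AC.ei i) U (y, t) := by
      funext y; exact AC.DD_slice hu _ _ _
    rw [h2]
    exact AC.DD_slice (AC.DD_contDiff _ hu) _ _ _
  have disc : ∀ x t, 0 ≤ t → (ε / 2) * ∑ i, AC.DD (AC.ei i) U (x, t) ^ 2
      ≤ (1 / ε) * ((1 / 2) * (1 - U (x, t) ^ 2) ^ 2) := by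
    intro x t ht
    rw [← AC.grad_sq hu]
    exact hdisc x t ht
  have en_nonneg : ∀ p, 0 ≤ AC.en ε U p := fun p => by unfold AC.en; positivity
  obtain ⟨K, hK⟩ := hbd (t + 1) (by linarith)
  have hsub : ∀ r ∈ Set.Icc 0 t, r ∈ Set.Icc 0 (t + 1) := fun r hr => ⟨hr.1, by linarith [hr.2]⟩
  have b0 : ∀ {g : EuclideanSpace ℝ (Fin n) × ℝ → ℝ} (x : EuclideanSpace ℝ (Fin n)) (r : ℝ),
      |g (x, r)| ≤ ‖iteratedFDeriv ℝ 0 (fun y => g (y, r)) x‖ := by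
    intro g x r; simp
  have cd1 := fun v => AC.DD_contDiff v hu
  have cd2 := fun v w => AC.DD_contDiff v (cd1 w)
  unfold areaRatio
  refine iSup_le fun y => iSup_le fun R => iSup_le fun hR => ?_
  have P0 : AC.PB y t U := AC.PB.of_bdd 1 fun x r _ => hu1 x r
  have P1 : ∀ i, AC.PB y t (AC.DD (AC.ei i) U) := fun i => AC.PB.of_bdd K fun x r hr =>
    (b0 x r).trans ((AC.DD_iter hu x r i 0).trans ((hK x r (hsub r hr)).1 1 (by norm_num)))
  have P2 : ∀ i j, AC.PB y t (AC.DD (AC.ei i) (AC.DD (AC.ei j) U)) := fun i j =>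
    AC.PB.of_bdd K fun x r hr => (b0 x r).trans ((AC.DD_iter (cd1 _) x r i 0).trans
      ((AC.DD_iter hu x r j 1).trans ((hK x r (hsub r hr)).1 2 (by norm_num))))
  have P3 : ∀ i j k, AC.PB y t (AC.DD (AC.ei i) (AC.DD (AC.ei j) (AC.DD (AC.ei k) U))) :=
    fun i j k => AC.PB.of_bdd K fun x r hr => (b0 x r).trans
      ((AC.DD_iter (cd2 _ _) x r i 0).trans ((AC.DD_iter (cd1 _) x r j 1).trans
      ((AC.DD_iter hu x r k 2).trans ((hK x r (hsub r hr)).1 3 (by norm_num)))))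
  have Pt : AC.PB y t (AC.DD AC.et U) := AC.PB.of_bdd K fun x r hr => by
    rw [← (AC.DD_time hu x r).deriv]
    exact (hK x r (hsub r hr)).2
  have Ptx : ∀ i, AC.PB y t (AC.DD AC.et (AC.DD (AC.ei i) U)) := by
    intro i
    have hP : AC.PB y t (fun p => ∑ j, AC.DD (AC.ei i) (AC.DD (AC.ei j) (AC.DD (AC.ei j) U)) p
        - (1 / ε ^ 2) * ((6 * U p ^ 2 - 2) * AC.DD (AC.ei i) U p)) :=
      (AC.PB.sum _ fun j => P3 i j j).sub ((AC.PB.const _).mul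
        ((((AC.PB.const 6).mul (P0.pow 2)).sub (AC.PB.const 2)).mul (P1 i)))
    obtain ⟨M, hM, k, H⟩ := hP
    refine ⟨M, hM, k, fun x r hr => ?_⟩
    refine le_of_eq_of_le (congrArg _ ?_) (H x r hr)
    rw [AC.DD_comm _ _ hu]
    have e0 := AC.DD_space (cd1 AC.et) x (EuclideanSpace.single i 1) r
    have e1 := HasDerivAt.fun_sum (u := Finset.univ) fun j (_ : j ∈ Finset.univ) =>
      AC.DD_space (cd2 (AC.ei j) (AC.ei j)) x (EuclideanSpace.single i 1) r
    have e2 := AC.DD_space hu x (EuclideanSpace.single i 1) r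
    have e3 := e1.sub (((e2.const_mul 2).mul ((e2.pow 2).sub_const 1)).const_mul (1 / ε ^ 2))
    have e4 : HasDerivAt (fun q : ℝ => AC.DD AC.et U (x + q • EuclideanSpace.single i (1 : ℝ), r))
        _ 0 := e3.congr_of_eventuallyEq
          (Filter.Eventually.of_forall fun q => pde _ r hr.1)
    refine (e0.unique e4).trans ?_
    simp only [AC.ei, Pi.pow_apply, zero_smul, add_zero, Nat.cast_ofNat]
    ring
  set s := t + R ^ 2 with hs
  have hts : t < s := by rw [hs]; linarith [pow_pos hR 2]
  have hs0 : 0 < s := by linarith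
  have hmono := AC.mono (y := y) hε hu ht hts pde disc P0 P1 P2 Pt Ptx
  have P0' : AC.PB y t (AC.en ε U) := AC.en_PB P0 P1
  have enc : Continuous (AC.en ε U) := AC.en_cont ε hu
  have encs : ∀ r, Continuous (fun x => AC.en ε U (x, r)) := fun r => by fun_prop
  have hpos : 0 < R ^ ((n : ℝ) - 1) := Real.rpow_pos_of_pos hR _
  rw [ENNReal.div_le_iff (by simpa using hpos) ENNReal.ofReal_ne_top]
  have conv : ∀ r ∈ Set.Icc 0 t, ENNReal.ofReal (∫ x, Real.exp (AC.phi y s x r) * AC.en ε U (x, r))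
      = ∫⁻ x, ENNReal.ofReal (Real.exp (AC.phi y s x r) * AC.en ε U (x, r)) := fun r hr =>
    ofReal_integral_eq_lintegral_ofReal (P0'.integrable hts hs0 hr (encs r))
      (Filter.Eventually.of_forall fun x => mul_nonneg (Real.exp_pos _).le (en_nonneg _))
  calc μ t (Metric.ball y R)
      = ∫⁻ x in Metric.ball y R, ENNReal.ofReal (AC.en ε U (x, t)) := by
        rw [hμ' t, withDensity_apply _ measurableSet_ball]
    _ ≤ ∫⁻ x in Metric.ball y R, ENNReal.ofReal (Real.exp (1 / 4) * R ^ ((n : ℝ) - 1)) *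
          ENNReal.ofReal (Real.exp (AC.phi y s x t) * AC.en ε U (x, t)) := by
        refine setLIntegral_mono' measurableSet_ball fun x hx => ?_
        rw [← ENNReal.ofReal_mul (by positivity), ← mul_assoc]
        exact ENNReal.ofReal_le_ofReal
          (le_mul_of_one_le_left (en_nonneg _) (AC.weight_ball y x t hR hx))
    _ ≤ ∫⁻ x, ENNReal.ofReal (Real.exp (1 / 4) * R ^ ((n : ℝ) - 1)) *
          ENNReal.ofReal (Real.exp (AC.phi y s x t) * AC.en ε U (x, t)) := setLIntegral_le_lintegral _ _
    _ = ENNReal.ofReal (Real.exp (1 / 4) * R ^ ((n : ℝ) - 1)) *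
          ENNReal.ofReal (∫ x, Real.exp (AC.phi y s x t) * AC.en ε U (x, t)) := by
        rw [lintegral_const_mul' _ _ ENNReal.ofReal_ne_top, conv t ⟨ht, le_rfl⟩]
    _ ≤ ENNReal.ofReal (Real.exp (1 / 4) * R ^ ((n : ℝ) - 1)) *
          ENNReal.ofReal (∫ x, Real.exp (AC.phi y s x 0) * AC.en ε U (x, 0)) := by
        gcongr
    _ = ENNReal.ofReal (Real.exp (1 / 4) * R ^ ((n : ℝ) - 1)) *
          ∫⁻ x, ENNReal.ofReal (Real.exp (AC.phi y s x 0)) ∂(μ 0) := by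
        have m1 : Measurable (fun x => ENNReal.ofReal (AC.en ε U (x, 0))) :=
          (encs 0).measurable.ennreal_ofReal
        have m2 : Measurable (fun x => ENNReal.ofReal (Real.exp (AC.phi y s x 0))) :=
          (Real.continuous_exp.comp (AC.phi_cont y s 0)).measurable.ennreal_ofReal
        rw [conv 0 ⟨le_rfl, ht⟩, hμ' 0, lintegral_withDensity_eq_lintegral_mul _ m1 m2]
        congr 2; funext x
        rw [Pi.mul_apply, ENNReal.ofReal_mul (Real.exp_pos _).le, mul_comm]
    _ ≤ ENNReal.ofReal (Real.exp (1 / 4) * R ^ ((n : ℝ) - 1)) *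
          ((AC.C1 n + 1) * areaRatio n (μ 0)) := by
        gcongr
        refine (AC.growth0 hn (μ 0) y hs0).trans ?_
        gcongr
        exact le_self_add
    _ = _ := by
        rw [ENNReal.ofReal_mul (Real.exp_pos _).le]
        unfold areaRatio
        ring
end
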